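/- Let Ω ⊆ ℂⁿ be a convex domain and let K, L ⊆ Ω be compact subsets. Then the following are equivalent: (1) there exists a holomorphic function f : Ω → ℂ such that the polynomially convex hulls of f(K) and f(L) in ℂ (hulls with respect to entire functions) are disjoint; (2) the 𝒪(Ω)-convex hulls satisfy K̂ ∩ L̂ = ∅ and the 𝒪(Ω)-convex hull of K ∪ L equals K̂ ∪ L̂. In particular, if K and L are disjoint compact 𝒪(Ω)-convex sets, then K ∪ L is 𝒪(Ω)-convex if and only if condition (1) holds. -/

import Mathlib

open scoped Manifold Topology
open Set Metric Filter

noncomputable section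

/-- The complex Euclidean space `ℂⁿ`. -/
abbrev CSpace (n : ℕ) : Type := EuclideanSpace ℂ (Fin n)

/-- The `𝒪(Ω)`-convex hull of a set `K ⊆ Ω`. -/
def OHull {n : ℕ} (Ω K : Set (CSpace n)) : Set (CSpace n) :=
  {x ∈ Ω | ∀ f : CSpace n → ℂ, DifferentiableOn ℂ f Ω → ‖f x‖ ≤ ⨆ y : K, ‖f ↑y‖}

/-- `τ` is a generalized translation of `Ω`: for every compact `𝒪(Ω)`-convex `K ⊆ Ω` there is
`j ≥ 1` with `τʲ(K) ∩ K = ∅` and `τʲ(K) ∪ K` again `𝒪(Ω)`-convex. -/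
def IsGenTranslation {n : ℕ} (Ω : Set (CSpace n)) (τ : CSpace n → CSpace n) : Prop :=
  ∀ K : Set (CSpace n), IsCompact K → K ⊆ Ω → OHull Ω K = K →
    ∃ j : ℕ, 1 ≤ j ∧ (τ^[j] '' K) ∩ K = ∅ ∧
      OHull Ω ((τ^[j] '' K) ∪ K) = (τ^[j] '' K) ∪ K

/-- The polynomially convex hull of a subset of `ℂ` (hull with respect to entire functions). -/
def PHull (A : Set ℂ) : Set ℂ :=
  {z | ∀ g : ℂ → ℂ, Differentiable ℂ g → ‖g z‖ ≤ ⨆ w : A, ‖g ↑w‖}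

lemma tendsto_nhdsSet_of_mapsTo {X Y : Type*} [TopologicalSpace X] [TopologicalSpace Y] {φ : X → Y}
    {Q : Set X} {R : Set Y} (hφ : ∀ x ∈ Q, ContinuousAt φ x) (hm : MapsTo φ Q R) :
    Tendsto φ (𝓝ˢ Q) (𝓝ˢ R) := by
  intro s hs
  rw [mem_map, mem_nhdsSet_iff_forall]
  intro x hx
  exact hφ x hx (mem_nhdsSet_iff_forall.1 hs _ (hm hx))

/-- `f` is holomorphic on a neighbourhood of `Q`. -/
def HolNear {E : Type*} [NormedAddCommGroup E] [NormedSpace ℂ E] (f : E → ℂ) (Q : Set E) : Prop :=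
  ∀ᶠ y in 𝓝ˢ Q, DifferentiableAt ℂ f y

namespace HolNear

variable {E F : Type*} [NormedAddCommGroup E] [NormedSpace ℂ E]
  [NormedAddCommGroup F] [NormedSpace ℂ F] {f g : E → ℂ} {Q R : Set E}

lemma mono (h : HolNear f R) (hQ : Q ⊆ R) : HolNear f Q :=
  Filter.Eventually.filter_mono (nhdsSet_mono hQ) h

lemma congr (h : HolNear f Q) (hfg : g =ᶠ[𝓝ˢ Q] f) : HolNear g Q := by
  filter_upwards [h, hfg.eventually_nhdsSet] with y hy hy'
  exact hy.congr_of_eventuallyEq hy'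

lemma add (hf : HolNear f Q) (hg : HolNear g Q) : HolNear (f + g) Q := by
  filter_upwards [hf, hg] with y h1 h2 using h1.add h2

lemma sub (hf : HolNear f Q) (hg : HolNear g Q) : HolNear (f - g) Q := by
  filter_upwards [hf, hg] with y h1 h2 using h1.sub h2

lemma mul (hf : HolNear f Q) (hg : HolNear g Q) : HolNear (f * g) Q := by
  filter_upwards [hf, hg] with y h1 h2 using h1.mul h2

lemma of_differentiable (hf : Differentiable ℂ f) : HolNear f Q :=
  Eventually.of_forall fun y => hf y

lemma of_forall (h : ∀ x ∈ Q, ∀ᶠ y in 𝓝 x, DifferentiableAt ℂ f y) : HolNear f Q :=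
  eventually_nhdsSet_iff_forall.2 h

lemma at_mem (h : HolNear f Q) {x : E} (hx : x ∈ Q) : ∀ᶠ y in 𝓝 x, DifferentiableAt ℂ f y :=
  eventually_nhdsSet_iff_forall.1 h x hx

lemma continuousOn (h : HolNear f Q) : ContinuousOn f Q := fun _ hx =>
  (h.at_mem hx).self_of_nhds.continuousAt.continuousWithinAt

lemma exists_isOpen (h : HolNear f Q) : ∃ U, IsOpen U ∧ Q ⊆ U ∧ ∀ x ∈ U, DifferentiableAt ℂ f x :=
  eventually_nhdsSet_iff_exists.1 h

lemma comp {φ : E → F} {k : F → ℂ} {R : Set F} (hk : HolNear k R)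
    (hφ : ∀ᶠ y in 𝓝ˢ Q, DifferentiableAt ℂ φ y) (hm : MapsTo φ Q R) : HolNear (k ∘ φ) Q := by
  have ht : Tendsto φ (𝓝ˢ Q) (𝓝ˢ R) :=
    tendsto_nhdsSet_of_mapsTo (fun x hx => (hφ.self_of_nhdsSet x hx).continuousAt) hm
  filter_upwards [hφ, ht.eventually hk] with y h1 h2
  exact DifferentiableAt.comp y h2 h1

lemma union (h₁ : HolNear f Q) (h₂ : HolNear f R) : HolNear f (Q ∪ R) :=
  Filter.Eventually.union h₁ h₂

end HolNear

lemma exists_glue {X Y : Type*} [TopologicalSpace X] [T2Space X] {A B : Set X} (hA : IsCompact A)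
    (hB : IsCompact B) {f g : X → Y} (h : f =ᶠ[𝓝ˢ (A ∩ B)] g) :
    ∃ k : X → Y, k =ᶠ[𝓝ˢ A] f ∧ k =ᶠ[𝓝ˢ B] g := by
  classical
  rw [EventuallyEq, hA.nhdsSet_inter_eq hB, Filter.eventually_inf] at h
  obtain ⟨s, hs, t, ht, hst⟩ := h
  refine ⟨s.piecewise f g, ?_, ?_⟩
  · filter_upwards [hs] with x hx
    simp [hx]
  · filter_upwards [ht] with x hx
    by_cases hxs : x ∈ s
    · simp [hxs, hst x ⟨hxs, hx⟩]
    · simp [hxs]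

section ParametricIntegral

variable {E : Type*} [NormedAddCommGroup E] [NormedSpace ℂ E]

lemma norm_fderiv_le_of_forall_norm_le {f : E → ℂ} {z : E} {r C : ℝ} (hr : 0 < r)
    (hf : DifferentiableOn ℂ f (ball z r)) (hC : ∀ y ∈ ball z r, ‖f y‖ < C) :
    ‖fderiv ℂ f z‖ ≤ 2 * C / r := by
  refine Complex.norm_fderiv_le_div_of_mapsTo_ball hf (fun y hy => ?_) hr
  rw [mem_closedBall, dist_eq_norm]
  have h1 := norm_sub_le (f y) (f z)
  have h2 := hC y hy
  have h3 := hC z (mem_ball_self hr)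
  linarith

lemma differentiableAt_intervalIntegral [FiniteDimensional ℂ E] {a b : ℝ} {h : ℝ → E → ℂ} {z₀ : E} {O : Set (ℝ × E)}
    (hO : IsOpen O) (hsub : ∀ t ∈ uIcc a b, (t, z₀) ∈ O) (hcont : ContinuousOn (Function.uncurry h) O)
    (hd : ∀ p ∈ O, DifferentiableAt ℂ (h p.1) p.2) :
    DifferentiableAt ℂ (fun z => ∫ t in a..b, h t z) z₀ := by
  have : ProperSpace E := FiniteDimensional.proper ℂ E
  obtain ⟨V, W, hV, hW, hIV, hzW, hVW⟩ := generalized_tube_lemma (isCompact_uIcc (a := a) (b := b))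
    (isCompact_singleton (x := z₀)) hO (by rintro ⟨t, z⟩ ⟨ht, rfl⟩; exact hsub t ht)
  obtain ⟨ρ, hρ, hball⟩ := Metric.nhds_basis_closedBall.mem_iff.1
    (hW.mem_nhds (hzW rfl))
  have hmem : ∀ t ∈ uIcc a b, ∀ z ∈ closedBall z₀ ρ, (t, z) ∈ O := fun t ht z hz =>
    hVW ⟨hIV ht, hball hz⟩
  have hK : IsCompact (uIcc a b ×ˢ closedBall z₀ ρ) :=
    isCompact_uIcc.prod (isCompact_closedBall _ _)
  have hcK : ContinuousOn (Function.uncurry h) (uIcc a b ×ˢ closedBall z₀ ρ) :=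
    hcont.mono fun p hp => hmem p.1 hp.1 p.2 hp.2
  obtain ⟨C, hC⟩ := hK.exists_bound_of_continuousOn hcK
  have hcz : ∀ z ∈ closedBall z₀ ρ, ContinuousOn (fun t => h t z) (uIcc a b) := fun z hz =>
    hcK.comp (f := fun t : ℝ => (t, z)) (by fun_prop) fun t ht => ⟨ht, hz⟩
  have hdz : ∀ t ∈ uIcc a b, ∀ z ∈ closedBall z₀ ρ, DifferentiableAt ℂ (h t) z :=
    fun t ht z hz => hd (t, z) (hmem t ht z hz)
  have hmeas : ∀ z ∈ closedBall z₀ ρ, MeasureTheory.AEStronglyMeasurable (fun t => h t z)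
      (MeasureTheory.volume.restrict (uIoc a b)) := fun z hz =>
    ((hcz z hz).mono uIoc_subset_uIcc).aestronglyMeasurable measurableSet_uIoc
  have hF' : ContinuousOn (fun t => fderiv ℂ (h t) z₀) (uIcc a b) := by
    have huc := hK.uniformContinuousOn_of_continuous hcK
    rw [Metric.uniformContinuousOn_iff] at huc
    intro t ht
    rw [ContinuousWithinAt, Metric.tendsto_nhdsWithin_nhds]
    intro ε hε
    obtain ⟨δ, hδ, H⟩ := huc (ε * ρ / 4) (by positivity)
    refine ⟨δ, hδ, fun s hs hst => ?_⟩
    have hz₀ : z₀ ∈ closedBall z₀ ρ := mem_closedBall_self hρ.le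
    rw [dist_eq_norm, ← fderiv_sub (hdz s hs z₀ hz₀) (hdz t ht z₀ hz₀)]
    refine (norm_fderiv_le_of_forall_norm_le (C := ε * ρ / 4) hρ ?_ ?_).trans_lt ?_
    · intro y hy
      exact ((hdz s hs y (ball_subset_closedBall hy)).sub
        (hdz t ht y (ball_subset_closedBall hy))).differentiableWithinAt
    · intro y hy
      have := H (s, y) ⟨hs, ball_subset_closedBall hy⟩ (t, y) ⟨ht, ball_subset_closedBall hy⟩
        (by simpa [Prod.dist_eq] using hst)
      simpa [dist_eq_norm] using this
    · field_simp
      linarith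
  refine HasFDerivAt.differentiableAt
    (intervalIntegral.hasFDerivAt_integral_of_dominated_of_fderiv_le (F := fun z t => h t z)
    (F' := fun z t => fderiv ℂ (h t) z) (s := ball z₀ (ρ / 2)) (bound := fun _ => 2 * (C + 1) / (ρ / 2))
    (ball_mem_nhds _ (by positivity)) ?_ ?_ ?_ ?_ ?_ ?_)
  · filter_upwards [closedBall_mem_nhds z₀ hρ] with z hz using hmeas z hz
  · exact (hcz z₀ (mem_closedBall_self hρ.le)).intervalIntegrable
  · exact (hF'.mono uIoc_subset_uIcc).aestronglyMeasurable measurableSet_uIoc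
  · refine Eventually.of_forall fun t ht z hz => ?_
    have hzb : ∀ y ∈ ball z (ρ / 2), y ∈ closedBall z₀ ρ := fun y hy => by
      rw [mem_ball] at hy hz
      rw [mem_closedBall]
      linarith [dist_triangle y z z₀]
    refine norm_fderiv_le_of_forall_norm_le (by positivity) (fun y hy =>
      (hdz t (uIoc_subset_uIcc ht) y (hzb y hy)).differentiableWithinAt) fun y hy => ?_
    have := hC (t, y) ⟨uIoc_subset_uIcc ht, hzb y hy⟩
    simp only [Function.uncurry] at this
    linarith
  · simp
  · refine Eventually.of_forall fun t ht z hz => (hdz t (uIoc_subset_uIcc ht) z ?_).hasFDerivAt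
    exact ball_subset_closedBall (ball_subset_ball (by linarith) hz)

lemma eventually_differentiableAt_intervalIntegral [FiniteDimensional ℂ E] {a b : ℝ} {h : ℝ → E → ℂ} {z₀ : E}
    {O : Set (ℝ × E)} (hO : IsOpen O) (hsub : ∀ t ∈ uIcc a b, (t, z₀) ∈ O)
    (hcont : ContinuousOn (Function.uncurry h) O)
    (hd : ∀ p ∈ O, DifferentiableAt ℂ (h p.1) p.2) :
    ∀ᶠ z in 𝓝 z₀, DifferentiableAt ℂ (fun z => ∫ t in a..b, h t z) z := by
  obtain ⟨V, W, hV, hW, hIV, hzW, hVW⟩ := generalized_tube_lemma (isCompact_uIcc (a := a) (b := b))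
    (isCompact_singleton (x := z₀)) hO (by rintro ⟨t, z⟩ ⟨ht, rfl⟩; exact hsub t ht)
  filter_upwards [hW.mem_nhds (hzW rfl)] with z hz
  exact differentiableAt_intervalIntegral hO (fun t ht => hVW ⟨hIV ht, hz⟩) hcont hd

end ParametricIntegral

lemma eventually_differentiableAt_intervalIntegral_div {E F : Type*} [NormedAddCommGroup E]
    [NormedSpace ℂ E] [FiniteDimensional ℂ E] [NormedAddCommGroup F] [NormedSpace ℂ F]
    {V : Set F} (hV : IsOpen V) {g : F → ℂ} (hg : ∀ x ∈ V, DifferentiableAt ℂ g x)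
    {φ : ℝ → E → F} (hφ : Continuous (Function.uncurry φ)) (hφd : ∀ t, Differentiable ℂ (φ t))
    {d : ℝ → E → ℂ} (hd : Continuous (Function.uncurry d)) (hdd : ∀ t, Differentiable ℂ (d t))
    {a b : ℝ} {z₀ : E} (h : ∀ t ∈ uIcc a b, φ t z₀ ∈ V ∧ d t z₀ ≠ 0) :
    ∀ᶠ z in 𝓝 z₀, DifferentiableAt ℂ (fun z => ∫ t in a..b, g (φ t z) / d t z) z := by
  refine eventually_differentiableAt_intervalIntegral (h := fun t z => g (φ t z) / d t z)
    (O := Function.uncurry φ ⁻¹' V ∩ Function.uncurry d ⁻¹' {0}ᶜ) ?_ h ?_ ?_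
  · exact (hV.preimage hφ).inter (isOpen_compl_singleton.preimage hd)
  · have hgV : ContinuousOn g V := fun x hx => (hg x hx).continuousAt.continuousWithinAt
    exact (hgV.comp hφ.continuousOn fun p hp => hp.1).div hd.continuousOn fun p hp => hp.2
  · intro p hp
    have h1 : DifferentiableAt ℂ (fun z => g (φ p.1 z)) p.2 :=
      DifferentiableAt.comp p.2 (hg _ hp.1) (hφd p.1 p.2)
    have h2 : DifferentiableAt ℂ (fun z => d p.1 z) p.2 := hdd p.1 p.2
    have h3 := h1.mul (h2.inv (show d p.1 p.2 ≠ 0 from hp.2))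
    simp only [div_eq_mul_inv]
    exact h3

section Rectangle

open Complex

/-- The integral of `f` over the positively oriented boundary of `[x₀, x₁] × [y₀, y₁]`. -/
def rectIntegral (f : ℂ → ℂ) (x₀ x₁ y₀ y₁ : ℝ) : ℂ :=
  (∫ x : ℝ in x₀..x₁, f (x + y₀ * I)) - (∫ x : ℝ in x₀..x₁, f (x + y₁ * I)) +
    I * (∫ y : ℝ in y₀..y₁, f (x₁ + y * I)) - I * (∫ y : ℝ in y₀..y₁, f (x₀ + y * I))

lemma log_I_mul {a : ℂ} (h₁ : 0 < a.re) (h₂ : a.im < 0) :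
    log (I * a) = log a + Real.pi / 2 * I := by
  have ha : a ≠ 0 := fun h => by simp [h] at h₁
  have h3 : |arg a| < Real.pi / 2 := abs_arg_lt_pi_div_two_iff.2 (Or.inl h₁)
  have h4 : arg a < 0 := arg_neg_iff.2 h₂
  rw [(log_mul_eq_add_log_iff I_ne_zero ha).2, log_I, add_comm]
  rw [arg_I, mem_Ioc]
  rw [abs_lt] at h3
  constructor <;> linarith [Real.pi_pos]

lemma integral_segment_inv {u v w : ℂ} {γ : ℝ → ℂ} (hγ : ∀ t, HasDerivAt γ v t) {a b : ℝ}
    (h : ∀ t ∈ uIcc a b, 0 < (u * (γ t - w)).re) :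
    v * (∫ t : ℝ in a..b, (γ t - w)⁻¹) = log (u * (γ b - w)) - log (u * (γ a - w)) := by
  have hne : ∀ t ∈ uIcc a b, u * (γ t - w) ≠ 0 := fun t ht h0 => by
    have := h t ht
    simp [h0] at this
  have hder : ∀ t ∈ uIcc a b, HasDerivAt (fun t : ℝ => log (u * (γ t - w)))
      (v * (γ t - w)⁻¹) t := by
    intro t ht
    have h2 := (((hγ t).sub_const w).const_mul u).clog_real (Or.inl (h t ht))
    convert h2 using 1
    have := left_ne_zero_of_mul (hne t ht)
    have := right_ne_zero_of_mul (hne t ht)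
    field_simp
  have hγc : Continuous γ := continuous_iff_continuousAt.2 fun t => (hγ t).continuousAt
  have hintegrable : IntervalIntegrable (fun t : ℝ => v * (γ t - w)⁻¹) MeasureTheory.volume a b :=
    (continuousOn_const.mul (ContinuousOn.inv₀ (by fun_prop)
      fun t ht => right_ne_zero_of_mul (hne t ht))).intervalIntegrable
  rw [← intervalIntegral.integral_const_mul]
  exact intervalIntegral.integral_eq_sub_of_hasDerivAt hder hintegrable

lemma rectIntegral_inv {x₀ x₁ y₀ y₁ : ℝ} {w : ℂ} (h1 : x₀ < w.re) (h2 : w.re < x₁) (h3 : y₀ < w.im)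
    (h4 : w.im < y₁) :
    rectIntegral (fun ξ => (ξ - w)⁻¹) x₀ x₁ y₀ y₁ = 2 * Real.pi * I := by
  have ho : ∀ t : ℝ, HasDerivAt (fun t : ℝ => (t : ℂ)) 1 t := fun t => Complex.ofRealCLM.hasDerivAt
  have hor : ∀ y t : ℝ, HasDerivAt (fun x : ℝ => (x : ℂ) + y * I) 1 t := fun y t =>
    (ho t).add_const _
  have ver : ∀ x t : ℝ, HasDerivAt (fun y : ℝ => (x : ℂ) + y * I) I t := fun x t => by
    simpa using ((ho t).mul_const I).const_add (x : ℂ)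
  have e1 := integral_segment_inv (u := I) (w := w) (a := x₀) (b := x₁) (hor y₀)
    (fun t _ => by simp; linarith)
  have e2 := integral_segment_inv (u := -I) (w := w) (a := x₀) (b := x₁) (hor y₁)
    (fun t _ => by simp; linarith)
  have e3 := integral_segment_inv (u := 1) (w := w) (a := y₀) (b := y₁) (ver x₁)
    (fun t _ => by simp; linarith)
  have e4 := integral_segment_inv (u := -1) (w := w) (a := y₀) (b := y₁) (ver x₀)
    (fun t _ => by simp; linarith)
  have l1 := log_I_mul (a := x₁ + y₀ * I - w) (by simp; linarith) (by simp; linarith)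
  have l2 := log_I_mul (a := -I * (x₁ + y₁ * I - w)) (by simp; linarith) (by simp; linarith)
  have l3 := log_I_mul (a := -1 * (x₀ + y₁ * I - w)) (by simp; linarith) (by simp; linarith)
  have l4 := log_I_mul (a := I * (x₀ + y₀ * I - w)) (by simp; linarith) (by simp; linarith)
  rw [show I * (-I * (x₁ + y₁ * I - w)) = 1 * (x₁ + y₁ * I - w) by
    linear_combination -(x₁ + y₁ * I - w) * I_mul_I] at l2
  rw [show I * (-1 * (x₀ + y₁ * I - w)) = -I * (x₀ + y₁ * I - w) by ring] at l3
  rw [show I * (I * (x₀ + y₀ * I - w)) = -1 * (x₀ + y₀ * I - w) by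
    linear_combination (x₀ + y₀ * I - w) * I_mul_I] at l4
  simp only [one_mul] at e1 e2 e3 e4 l1 l2 l3 l4
  unfold rectIntegral
  linear_combination e1 - e2 + e3 - e4 + l1 + l2 + l3 + l4

lemma rectIntegral_cauchy {f : ℂ → ℂ} {x₀ x₁ y₀ y₁ : ℝ} {w : ℂ} (h1 : x₀ < w.re) (h2 : w.re < x₁)
    (h3 : y₀ < w.im) (h4 : w.im < y₁)
    (hf : ∀ ξ ∈ Icc x₀ x₁ ×ℂ Icc y₀ y₁, DifferentiableAt ℂ f ξ) :
    rectIntegral (fun ξ => f ξ / (ξ - w)) x₀ x₁ y₀ y₁ = 2 * Real.pi * I * f w := by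
  have hx : uIcc x₀ x₁ = Icc x₀ x₁ := uIcc_of_le (by linarith)
  have hy : uIcc y₀ y₁ = Icc y₀ y₁ := uIcc_of_le (by linarith)
  have hw : w ∈ Icc x₀ x₁ ×ℂ Icc y₀ y₁ := ⟨⟨h1.le, h2.le⟩, ⟨h3.le, h4.le⟩⟩
  have hcont : ContinuousOn (dslope f w) (Icc x₀ x₁ ×ℂ Icc y₀ y₁) := by
    intro ξ hξ
    by_cases hξw : ξ = w
    · subst hξw
      exact (continuousAt_dslope_same.2 (hf ξ hξ)).continuousWithinAt
    · exact ((continuousAt_dslope_of_ne hξw).2 (hf ξ hξ).continuousAt).continuousWithinAt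
  have key := integral_boundary_rect_eq_zero_of_differentiable_on_off_countable (dslope f w)
    ⟨x₀, y₀⟩ ⟨x₁, y₁⟩ {w} (countable_singleton w) (by simpa [hx, hy] using hcont) (by
      rintro ξ ⟨hξ, hξw⟩
      rw [mem_singleton_iff] at hξw
      rw [min_eq_left (by simp; linarith), max_eq_right (by simp; linarith),
        min_eq_left (by simp; linarith), max_eq_right (by simp; linarith)] at hξ
      refine (differentiableAt_dslope_of_ne hξw).2 (hf ξ ?_)
      exact ⟨Ioo_subset_Icc_self hξ.1, Ioo_subset_Icc_self hξ.2⟩)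
  have hedge : ∀ {a b : ℝ} {γ : ℝ → ℂ}, Continuous γ → 
      (∀ t ∈ uIcc a b, γ t ∈ Icc x₀ x₁ ×ℂ Icc y₀ y₁ ∧ γ t ≠ w) →
      (∫ t in a..b, f (γ t) / (γ t - w)) =
        (∫ t in a..b, dslope f w (γ t)) + f w * ∫ t in a..b, (γ t - w)⁻¹ := by
    intro a b γ hγ hm
    have i1 : IntervalIntegrable (fun t => dslope f w (γ t)) MeasureTheory.volume a b :=
      (hcont.comp hγ.continuousOn fun t ht => (hm t ht).1).intervalIntegrable
    have i2 : IntervalIntegrable (fun t => f w * (γ t - w)⁻¹) MeasureTheory.volume a b :=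
      (continuousOn_const.mul (ContinuousOn.inv₀ (by fun_prop) fun t ht =>
        sub_ne_zero.2 (hm t ht).2)).intervalIntegrable
    rw [← intervalIntegral.integral_const_mul, ← intervalIntegral.integral_add i1 i2]
    refine intervalIntegral.integral_congr fun t ht => ?_
    have hne := (hm t ht).2
    have hne' := sub_ne_zero.2 hne
    simp only [dslope_of_ne _ hne, slope_def_field]
    field_simp
    ring
  have b1 := hedge (a := x₀) (b := x₁) (γ := fun x : ℝ => x + y₀ * I) (by fun_prop) (fun t ht => by
    rw [hx] at ht
    refine ⟨⟨by simpa using ht, by simp; linarith⟩, fun h => ?_⟩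
    have := congrArg im h
    simp at this; linarith)
  have b2 := hedge (a := x₀) (b := x₁) (γ := fun x : ℝ => x + y₁ * I) (by fun_prop) (fun t ht => by
    rw [hx] at ht
    refine ⟨⟨by simpa using ht, by simp; linarith⟩, fun h => ?_⟩
    have := congrArg im h
    simp at this; linarith)
  have b3 := hedge (a := y₀) (b := y₁) (γ := fun y : ℝ => x₁ + y * I) (by fun_prop) (fun t ht => by
    rw [hy] at ht
    refine ⟨⟨by simp; linarith, by simpa using ht⟩, fun h => ?_⟩
    have := congrArg re h
    simp at this; linarith)
  have b4 := hedge (a := y₀) (b := y₁) (γ := fun y : ℝ => x₀ + y * I) (by fun_prop) (fun t ht => by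
    rw [hy] at ht
    refine ⟨⟨by simp; linarith, by simpa using ht⟩, fun h => ?_⟩
    have := congrArg re h
    simp at this; linarith)
  have hinv := rectIntegral_inv h1 h2 h3 h4
  unfold rectIntegral at hinv ⊢
  simp only [smul_eq_mul] at key
  rw [b1, b2, b3, b4]
  linear_combination key + f w * hinv

end Rectangle

section Split

variable {ι : Type} [Fintype ι] [DecidableEq ι]

lemma differentiable_update_left (i : ι) (w : ℂ) :
    Differentiable ℂ (fun z : ι → ℂ => Function.update z i w) := by
  rw [differentiable_pi]
  intro j
  by_cases h : j = i
  · subst h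
    simp
  · simp only [Function.update_of_ne h]
    fun_prop

omit [Fintype ι] in
lemma continuous_update_param (i : ι) (γ : ℝ → ℂ) (hγ : Continuous γ) :
    Continuous (Function.uncurry fun (t : ℝ) (z : ι → ℂ) => Function.update z i (γ t)) := by
  unfold Function.uncurry
  exact continuous_snd.update i (hγ.comp continuous_fst)

/-- Additive splitting of a holomorphic function along the real hyperplane `re (u * z i) = c`,
by cutting a Cauchy integral into its two halves. -/
lemma exists_split_aux {B : Set (ι → ℂ)} (hBc : IsCompact B) (i : ι) {u : ℂ} (hu : u ≠ 0)
    {c α β : ℝ} (hB : ∀ z ∈ B, ∀ y ∈ Icc α β, Function.update z i (u⁻¹ * (c + y * Complex.I)) ∈ B)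
    (him : ∀ z ∈ B, (u * z i).im ∈ Icc α β) {g : (ι → ℂ) → ℂ}
    (hg : HolNear g (B ∩ {z | (u * z i).re = c})) :
    ∃ g₁ g₂ : (ι → ℂ) → ℂ, HolNear g₁ (B ∩ {z | (u * z i).re ≤ c}) ∧
      HolNear g₂ (B ∩ {z | c ≤ (u * z i).re}) ∧
      g₁ - g₂ =ᶠ[𝓝ˢ (B ∩ {z | (u * z i).re = c})] g := by
  rcases B.eq_empty_or_nonempty with rfl | ⟨b, hb⟩
  · exact ⟨0, 0, by simp [HolNear], by simp [HolNear], by simp [EventuallyEq]⟩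
  have hαβ : α ≤ β := (him b hb).1.trans (him b hb).2
  obtain ⟨V, hV, hSV, hgV⟩ := hg.exists_isOpen
  have hupd : Continuous fun p : (ι → ℂ) × ℂ => Function.update p.1 i (u⁻¹ * p.2) :=
    continuous_fst.update i (by fun_prop)
  have hsegc : IsCompact ({c} ×ℂ Icc α β) := isCompact_singleton.reProdIm isCompact_Icc
  obtain ⟨U, W, hU, hW, hBU, hcW, hUW⟩ := generalized_tube_lemma hBc hsegc (hV.preimage hupd) (by
    rintro ⟨z, ξ⟩ ⟨hz, hξ⟩
    have hξ' : ξ = c + ξ.im * Complex.I := by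
      conv_lhs => rw [← Complex.re_add_im ξ, show ξ.re = c from hξ.1]
    refine hSV ⟨?_, ?_⟩
    · have := hB z hz ξ.im hξ.2
      rwa [← hξ'] at this
    · simp only [Function.update_self, mem_ofPred_eq]
      rw [mul_inv_cancel_left₀ hu]
      exact hξ.1)
  obtain ⟨ε, hε, hεW⟩ := hsegc.exists_cthickening_subset_open hW hcW
  set δ := ε / 2 with hδ
  have hδ0 : 0 < δ := by positivity
  have hRW : Icc (c - δ) (c + δ) ×ℂ Icc (α - δ) (β + δ) ⊆ W := by
    rintro ξ ⟨h1, h2⟩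
    simp only [mem_preimage, mem_Icc] at h1 h2
    refine hεW ?_
    refine mem_cthickening_of_dist_le ξ (c + (max α (min β ξ.im) : ℝ) * Complex.I) _ _
      ⟨by simp, by simp [hαβ]⟩ ?_
    rw [dist_eq_norm]
    refine (Complex.norm_le_abs_re_add_abs_im _).trans ?_
    have e1 : |(ξ - (c + (max α (min β ξ.im) : ℝ) * Complex.I)).re| ≤ δ := by
      simp only [Complex.sub_re, Complex.add_re, Complex.ofReal_re, Complex.mul_re, Complex.I_re,
        Complex.ofReal_im, Complex.I_im]
      rw [abs_le]; constructor <;> linarith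
    have e2 : |(ξ - (c + (max α (min β ξ.im) : ℝ) * Complex.I)).im| ≤ δ := by
      simp only [Complex.sub_im, Complex.add_im, Complex.ofReal_re, Complex.mul_im, Complex.I_re,
        Complex.ofReal_im, Complex.I_im]
      rw [abs_le]
      rcases max_cases α (min β ξ.im) with h | h <;> rcases min_cases β ξ.im with h' | h' <;>
        constructor <;> linarith
    linarith
  have hmem : ∀ z ∈ U, ∀ ξ ∈ Icc (c - δ) (c + δ) ×ℂ Icc (α - δ) (β + δ),
      Function.update z i (u⁻¹ * ξ) ∈ V := fun z hz ξ hξ => by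
    have h : (z, ξ) ∈ U ×ˢ W := ⟨hz, hRW hξ⟩
    exact hUW h
  have hol : ∀ {γ : ℝ → ℂ} {a b : ℝ} {z₀ : ι → ℂ}, Continuous γ → z₀ ∈ U →
      (∀ t ∈ uIcc a b, γ t ∈ Icc (c - δ) (c + δ) ×ℂ Icc (α - δ) (β + δ) ∧ γ t - u * z₀ i ≠ 0) →
      ∀ᶠ z in 𝓝 z₀, DifferentiableAt ℂ (fun z => ∫ t in a..b,
        g (Function.update z i (u⁻¹ * γ t)) / (γ t - u * z i)) z := by
    intro γ a b z₀ hγ hz₀ h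
    refine eventually_differentiableAt_intervalIntegral_div hV hgV
      (φ := fun t z => Function.update z i (u⁻¹ * γ t)) (d := fun t z => γ t - u * z i)
      (continuous_update_param i (fun t => u⁻¹ * γ t) (by fun_prop))
      (fun t => differentiable_update_left i _) ?_ (fun t => by fun_prop) ?_
    · unfold Function.uncurry; fun_prop
    · exact fun t ht => ⟨hmem z₀ hz₀ _ (h t ht).1, (h t ht).2⟩
  set k : (ι → ℂ) → ℂ → ℂ := fun z ξ => g (Function.update z i (u⁻¹ * ξ)) / (ξ - u * z i) with hk
  set hor : ℝ → ℝ → ℝ → (ι → ℂ) → ℂ := fun a b y z => ∫ x : ℝ in a..b, k z (x + y * Complex.I)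
    with hhor
  set ver : ℝ → ℝ → ℝ → (ι → ℂ) → ℂ := fun a b x z => ∫ y : ℝ in a..b, k z (x + y * Complex.I)
    with hver
  have hhol : ∀ {a b y : ℝ} {z₀ : ι → ℂ}, z₀ ∈ U → a ≤ b → c - δ ≤ a → b ≤ c + δ →
      y ∈ Icc (α - δ) (β + δ) → y ≠ (u * z₀ i).im →
      ∀ᶠ z in 𝓝 z₀, DifferentiableAt ℂ (hor a b y) z := by
    intro a b y z₀ hz₀ hab ha hb hy hne
    refine hol (γ := fun x : ℝ => (x : ℂ) + y * Complex.I) (by fun_prop) hz₀ fun t ht => ?_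
    rw [uIcc_of_le hab] at ht
    refine ⟨⟨?_, by simpa using hy⟩, fun h => hne ?_⟩
    · simp only [mem_preimage, mem_Icc, Complex.add_re, Complex.ofReal_re, Complex.mul_re,
        Complex.I_re, Complex.ofReal_im, Complex.I_im]
      constructor <;> linarith [ht.1, ht.2]
    · have := congrArg Complex.im (sub_eq_zero.1 h)
      simpa using this
  have hverh : ∀ {x : ℝ} {z₀ : ι → ℂ}, z₀ ∈ U → x ∈ Icc (c - δ) (c + δ) → x ≠ (u * z₀ i).re →
      ∀ᶠ z in 𝓝 z₀, DifferentiableAt ℂ (ver (α - δ) (β + δ) x) z := by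
    intro x z₀ hz₀ hx hne
    refine hol (γ := fun y : ℝ => (x : ℂ) + y * Complex.I) (by fun_prop) hz₀ fun t ht => ?_
    rw [uIcc_of_le (by linarith)] at ht
    refine ⟨⟨by simpa using hx, by simpa using ht⟩, fun h => hne ?_⟩
    have := congrArg Complex.re (sub_eq_zero.1 h)
    simpa using this
  refine ⟨fun z => (2 * Real.pi * Complex.I)⁻¹ * (hor c (c + δ) (α - δ) z - hor c (c + δ) (β + δ) z
      + Complex.I * ver (α - δ) (β + δ) (c + δ) z),
    fun z => -(2 * Real.pi * Complex.I)⁻¹ * (hor (c - δ) c (α - δ) z - hor (c - δ) c (β + δ) z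
      - Complex.I * ver (α - δ) (β + δ) (c - δ) z), ?_, ?_, ?_⟩
  · refine HolNear.of_forall fun z hz => ?_
    obtain ⟨hz1, hz2⟩ := hz
    simp only [mem_ofPred_eq] at hz2
    have := him z hz1
    rw [mem_Icc] at this
    filter_upwards [hhol (a := c) (b := c + δ) (y := α - δ) (hBU hz1) (by linarith) (by linarith)
        le_rfl ⟨by linarith, by linarith⟩ (by linarith),
      hhol (a := c) (b := c + δ) (y := β + δ) (hBU hz1) (by linarith) (by linarith)
        le_rfl ⟨by linarith, by linarith⟩ (by linarith),
      hverh (x := c + δ) (hBU hz1) ⟨by linarith, by linarith⟩ (by linarith)] with y h1 h2 h3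
    exact ((h1.sub h2).add (h3.const_mul _)).const_mul _
  · refine HolNear.of_forall fun z hz => ?_
    obtain ⟨hz1, hz2⟩ := hz
    simp only [mem_ofPred_eq] at hz2
    have := him z hz1
    rw [mem_Icc] at this
    filter_upwards [hhol (a := c - δ) (b := c) (y := α - δ) (hBU hz1) (by linarith) (by linarith)
        (by linarith) ⟨by linarith, by linarith⟩ (by linarith),
      hhol (a := c - δ) (b := c) (y := β + δ) (hBU hz1) (by linarith) (by linarith)
        (by linarith) ⟨by linarith, by linarith⟩ (by linarith),
      hverh (x := c - δ) (hBU hz1) ⟨by linarith, by linarith⟩ (by linarith)] with y h1 h2 h3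
    exact ((h1.sub h2).sub (h3.const_mul _)).const_mul _
  · refine eventually_nhdsSet_iff_forall.2 fun z₀ hz₀ => ?_
    obtain ⟨hz1, hz2⟩ := hz₀
    simp only [mem_ofPred_eq] at hz2
    have him0 := him z₀ hz1
    rw [mem_Icc] at him0
    have hcre : Continuous fun z : ι → ℂ => (u * z i).re := by fun_prop
    have hcim : Continuous fun z : ι → ℂ => (u * z i).im := by fun_prop
    filter_upwards [hU.mem_nhds (hBU hz1),
      (isOpen_Ioo.preimage hcre).mem_nhds (show (u * z₀ i).re ∈ Ioo (c - δ) (c + δ) from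
        ⟨by linarith, by linarith⟩),
      (isOpen_Ioo.preimage hcim).mem_nhds (show (u * z₀ i).im ∈ Ioo (α - δ) (β + δ) from
        ⟨by linarith, by linarith⟩)] with z hzU hzr hzi
    have hkc : ∀ {γ : ℝ → ℂ} {a b : ℝ}, Continuous γ →
        (∀ t ∈ uIcc a b, γ t ∈ Icc (c - δ) (c + δ) ×ℂ Icc (α - δ) (β + δ) ∧ γ t - u * z i ≠ 0) →
        IntervalIntegrable (fun t => k z (γ t)) MeasureTheory.volume a b := by
      intro γ a b hγ h
      have hgc : ContinuousOn g V := fun x hx => (hgV x hx).continuousAt.continuousWithinAt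
      refine ContinuousOn.intervalIntegrable (ContinuousOn.div (hgc.comp (t := V)
        (f := fun t => Function.update z i (u⁻¹ * γ t)) ?_ fun t ht => hmem z hzU _ (h t ht).1)
        (by fun_prop) fun t ht => (h t ht).2)
      exact (continuous_const.update i (by fun_prop)).continuousOn
    have hkh : ∀ {a b y : ℝ}, a ≤ b → c - δ ≤ a → b ≤ c + δ →
        y ∈ Icc (α - δ) (β + δ) → y ≠ (u * z i).im →
        IntervalIntegrable (fun x : ℝ => k z (x + y * Complex.I)) MeasureTheory.volume a b := by
      intro a b y hab ha hb hy hne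
      refine hkc (γ := fun x : ℝ => (x : ℂ) + y * Complex.I) (by fun_prop) fun t ht => ?_
      rw [uIcc_of_le hab] at ht
      refine ⟨⟨?_, by simpa using hy⟩, fun h => hne ?_⟩
      · simp only [mem_preimage, mem_Icc, Complex.add_re, Complex.ofReal_re, Complex.mul_re,
          Complex.I_re, Complex.ofReal_im, Complex.I_im]
        constructor <;> linarith [ht.1, ht.2]
      · have := congrArg Complex.im (sub_eq_zero.1 h)
        simpa using this
    have key := rectIntegral_cauchy (f := fun ξ => g (Function.update z i (u⁻¹ * ξ)))
      (w := u * z i) hzr.1 hzr.2 hzi.1 hzi.2 (fun ξ hξ => by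
        have h1 : DifferentiableAt ℂ (fun ξ : ℂ => Function.update z i (u⁻¹ * ξ)) ξ := by
          rw [differentiableAt_pi]
          intro j
          by_cases hj : j = i
          · subst hj
            simp only [Function.update_self]
            fun_prop
          · simp only [Function.update_of_ne hj]
            fun_prop
        exact DifferentiableAt.comp ξ (hgV _ (hmem z hzU ξ hξ)) h1)
    simp only [inv_mul_cancel_left₀ hu, Function.update_eq_self] at key
    have hpi : (2 * Real.pi * Complex.I : ℂ) ≠ 0 := by simp [Real.pi_ne_zero]
    have hzi1 := hzi.1
    have hzi2 := hzi.2
    simp only at hzi1 hzi2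
    have hadd : ∀ y ∈ Icc (α - δ) (β + δ), y ≠ (u * z i).im →
        hor (c - δ) c y z + hor c (c + δ) y z = hor (c - δ) (c + δ) y z := fun y hy hne =>
      intervalIntegral.integral_add_adjacent_intervals
        (hkh (by linarith) (by linarith) (by linarith) hy hne)
        (hkh (by linarith) (by linarith) (by linarith) hy hne)
    have a1 := hadd (α - δ) ⟨by linarith, by linarith⟩ hzi1.ne
    have a2 := hadd (β + δ) ⟨by linarith, by linarith⟩ hzi2.ne'
    have key' : hor (c - δ) (c + δ) (α - δ) z - hor (c - δ) (c + δ) (β + δ) z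
        + Complex.I * ver (α - δ) (β + δ) (c + δ) z - Complex.I * ver (α - δ) (β + δ) (c - δ) z
        = 2 * Real.pi * Complex.I * g z := key
    rw [← a1, ← a2] at key'
    simp only [Pi.sub_apply]
    rw [← mul_right_inj' hpi, ← key']
    field_simp
    ring

/-- The unit complex number turning the real coordinate `κ` into a real part. -/
def cutUnit (κ : ι × Bool) : ℂ := if κ.2 then -Complex.I else 1

/-- The real coordinates of `ι → ℂ`: real parts for `false`, imaginary parts for `true`. -/
def rc (κ : ι × Bool) (z : ι → ℂ) : ℝ := (cutUnit κ * z κ.1).re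

/-- A closed box in `ι → ℂ`. -/
def box (lo hi : ι × Bool → ℝ) : Set (ι → ℂ) := {z | ∀ κ, lo κ ≤ rc κ z ∧ rc κ z ≤ hi κ}

omit [Fintype ι] [DecidableEq ι] in
@[simp] lemma rc_false (i : ι) (z : ι → ℂ) : rc (i, false) z = (z i).re := by simp [rc, cutUnit]

omit [Fintype ι] [DecidableEq ι] in
@[simp] lemma rc_true (i : ι) (z : ι → ℂ) : rc (i, true) z = (z i).im := by simp [rc, cutUnit]

omit [Fintype ι] [DecidableEq ι] in
lemma continuous_rc (κ : ι × Bool) : Continuous (rc κ) := by unfold rc; fun_prop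

omit [Fintype ι] [DecidableEq ι] in
lemma abs_rc_le (κ : ι × Bool) (z : ι → ℂ) : |rc κ z| ≤ ‖z κ.1‖ := by
  obtain ⟨i, b⟩ := κ
  cases b
  · simpa using Complex.abs_re_le_norm _
  · simpa using Complex.abs_im_le_norm _

omit [DecidableEq ι] in
lemma isCompact_box (lo hi : ι × Bool → ℝ) : IsCompact (box lo hi) := by
  refine Metric.isCompact_of_isClosed_isBounded ?_ ?_
  · have : box lo hi = ⋂ κ, {z | lo κ ≤ rc κ z} ∩ {z | rc κ z ≤ hi κ} := by
      ext z; simp [box]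
    rw [this]
    exact isClosed_iInter fun κ => (isClosed_le continuous_const (continuous_rc κ)).inter
      (isClosed_le (continuous_rc κ) continuous_const)
  · classical
    refine (isBounded_iff_forall_norm_le.2 ⟨∑ κ, (|lo κ| + |hi κ|), fun z hz => ?_⟩)
    have hb : ∀ κ, |rc κ z| ≤ |lo κ| + |hi κ| := fun κ => by
      rw [abs_le]
      constructor
      · linarith [(hz κ).1, neg_abs_le (lo κ), abs_nonneg (hi κ)]
      · linarith [(hz κ).2, le_abs_self (hi κ), abs_nonneg (lo κ)]
    refine (pi_norm_le_iff_of_nonneg (Finset.sum_nonneg fun κ _ => by positivity)).2 fun i => ?_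
    refine (Complex.norm_le_abs_re_add_abs_im _).trans ?_
    have h1 := hb (i, false)
    have h2 := hb (i, true)
    simp only [rc_false, rc_true] at h1 h2
    have h3 : ∑ κ ∈ {((i, false) : ι × Bool), (i, true)}, (|lo κ| + |hi κ|)
        ≤ ∑ κ, (|lo κ| + |hi κ|) :=
      Finset.sum_le_univ_sum_of_nonneg fun κ => by positivity
    rw [Finset.sum_pair (by simp)] at h3
    linarith

lemma exists_split_box (lo hi : ι × Bool → ℝ) (κ : ι × Bool) (c : ℝ) {g : (ι → ℂ) → ℂ}
    (hg : HolNear g (box lo hi ∩ {z | rc κ z = c})) :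
    ∃ g₁ g₂ : (ι → ℂ) → ℂ, HolNear g₁ (box lo hi ∩ {z | rc κ z ≤ c}) ∧
      HolNear g₂ (box lo hi ∩ {z | c ≤ rc κ z}) ∧
      g₁ - g₂ =ᶠ[𝓝ˢ (box lo hi ∩ {z | rc κ z = c})] g := by
  rcases (box lo hi ∩ {z | rc κ z = c}).eq_empty_or_nonempty with he | ⟨s, hs, hsc⟩
  · rw [he]
    exact ⟨0, 0, HolNear.of_differentiable (differentiable_const _),
      HolNear.of_differentiable (differentiable_const _), by simp [EventuallyEq]⟩
  have hκ := hs κ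
  rw [mem_ofPred_eq] at hsc
  rw [hsc] at hκ
  obtain ⟨i, b⟩ := κ
  have hupd : ∀ (z : ι → ℂ) (w : ℂ), z ∈ box lo hi → lo (i, false) ≤ w.re → w.re ≤ hi (i, false) →
      lo (i, true) ≤ w.im → w.im ≤ hi (i, true) → Function.update z i w ∈ box lo hi := by
    rintro z w hz h1 h2 h3 h4 ⟨j, b'⟩
    by_cases hj : j = i
    · subst hj
      cases b' <;> simp [*]
    · have := hz (j, b')
      unfold rc at this ⊢
      simpa only [Function.update_of_ne hj] using this
  cases b
  · refine exists_split_aux (isCompact_box lo hi) i (u := cutUnit (i, false)) (by simp [cutUnit])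
      (α := lo (i, true)) (β := hi (i, true)) ?_ ?_ hg
    · intro z hz y hy
      refine hupd z _ hz ?_ ?_ ?_ ?_ <;> simp [cutUnit, hy.1, hy.2, hκ.1, hκ.2]
    · intro z hz
      simpa [cutUnit] using hz (i, true)
  · refine exists_split_aux (isCompact_box lo hi) i (u := cutUnit (i, true)) (by simp [cutUnit])
      (α := -hi (i, false)) (β := -lo (i, false)) ?_ ?_ hg
    · intro z hz y hy
      refine hupd z _ hz ?_ ?_ ?_ ?_ <;> simp [cutUnit, hκ.1, hκ.2] <;> linarith [hy.1, hy.2]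
    · intro z hz
      have := hz (i, false)
      simp at this
      simp [cutUnit]
      constructor <;> linarith [this.1, this.2]

end Split

section Polyhedra

/-- The closed square of side `2` centred at `0` in `ℂ`. -/
def unitSquare : Set ℂ := {w | |w.re| ≤ 1 ∧ |w.im| ≤ 1}

lemma isClosed_unitSquare : IsClosed unitSquare :=
  (isClosed_le Complex.continuous_re.abs continuous_const).inter
    (isClosed_le Complex.continuous_im.abs continuous_const)

/-- Analytic polyhedra: boxes successively cut down by `m` conditions `p z ∈ unitSquare`, with `p`
holomorphic near the previous polyhedron. -/
def IsPolyhedron {ι : Type} [Fintype ι] : ℕ → Set (ι → ℂ) → Prop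
  | 0, Q => ∃ lo hi, Q = box lo hi
  | m + 1, Q => ∃ (Q' : Set (ι → ℂ)) (p : (ι → ℂ) → ℂ),
      IsPolyhedron m Q' ∧ HolNear p Q' ∧ Q = Q' ∩ p ⁻¹' unitSquare

/-- The cylinder over `Q` with base the unit square. -/
def cyl {ι : Type} (Q : Set (ι → ℂ)) : Set (Option ι → ℂ) :=
  {y | (fun i => y (some i)) ∈ Q ∧ y none ∈ unitSquare}

/-- The map `z ↦ (p z, z)`. -/
def graphMap {ι : Type} (p : (ι → ℂ) → ℂ) (z : ι → ℂ) : Option ι → ℂ := fun o => o.elim (p z) z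

/-- The additive splitting property of all analytic polyhedra defined by `m` conditions. -/
def SplitProp (m : ℕ) : Prop :=
  ∀ (ι : Type) [Fintype ι] [DecidableEq ι] (Q : Set (ι → ℂ)), IsPolyhedron m Q →
    ∀ (κ : ι × Bool) (c : ℝ) (g : (ι → ℂ) → ℂ), HolNear g (Q ∩ {z | rc κ z = c}) →
    ∃ g₁ g₂ : (ι → ℂ) → ℂ, HolNear g₁ (Q ∩ {z | rc κ z ≤ c}) ∧
      HolNear g₂ (Q ∩ {z | c ≤ rc κ z}) ∧ g₁ - g₂ =ᶠ[𝓝ˢ (Q ∩ {z | rc κ z = c})] g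

variable {ι : Type} [Fintype ι]

lemma IsPolyhedron.isCompact : ∀ {m : ℕ} {Q : Set (ι → ℂ)}, IsPolyhedron m Q → IsCompact Q
  | 0, _, ⟨lo, hi, h⟩ => h ▸ isCompact_box lo hi
  | m + 1, _, ⟨Q', p, hQ', hp, h⟩ => by
    have hc := hQ'.isCompact
    rw [h]
    exact hc.of_isClosed_subset
      (hp.continuousOn.preimage_isClosed_of_isClosed hc.isClosed isClosed_unitSquare)
      inter_subset_left

lemma IsPolyhedron.inter {H : Set (ι → ℂ)}
    (hH : ∀ lo hi : ι × Bool → ℝ, ∃ lo' hi', box lo hi ∩ H = box lo' hi') :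
    ∀ {m : ℕ} {Q : Set (ι → ℂ)}, IsPolyhedron m Q → IsPolyhedron m (Q ∩ H)
  | 0, _, ⟨lo, hi, h⟩ => by
    obtain ⟨lo', hi', h'⟩ := hH lo hi
    exact ⟨lo', hi', by rw [h, h']⟩
  | m + 1, _, ⟨Q', p, hQ', hp, h⟩ =>
    ⟨Q' ∩ H, p, hQ'.inter hH, hp.mono inter_subset_left, by rw [h, inter_right_comm]⟩

omit [Fintype ι] in
lemma box_inter_box (lo hi lo' hi' : ι × Bool → ℝ) :
    box lo hi ∩ box lo' hi' = box (fun κ => max (lo κ) (lo' κ)) (fun κ => min (hi κ) (hi' κ)) := by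
  ext z
  simp only [box, mem_inter_iff, mem_ofPred_eq, max_le_iff, le_min_iff, ← forall_and]
  exact forall_congr' fun κ => by tauto

omit [Fintype ι] in
lemma box_inter_le [DecidableEq ι] (lo hi : ι × Bool → ℝ) (κ : ι × Bool) (c : ℝ) :
    box lo hi ∩ {z | rc κ z ≤ c} = box lo (Function.update hi κ (min (hi κ) c)) := by
  ext z
  simp only [box, mem_inter_iff, mem_ofPred_eq]
  constructor
  · rintro ⟨h1, h2⟩ κ'
    by_cases h : κ' = κ
    · subst h
      simp [h1 κ', h2]
    · simpa [h] using h1 κ'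
  · intro h
    have hκ := h κ
    simp only [Function.update_self, le_min_iff] at hκ
    refine ⟨fun κ' => ?_, hκ.2.2⟩
    by_cases h' : κ' = κ
    · subst h'
      exact ⟨hκ.1, hκ.2.1⟩
    · simpa [h'] using h κ'

omit [Fintype ι] in
lemma box_inter_ge [DecidableEq ι] (lo hi : ι × Bool → ℝ) (κ : ι × Bool) (c : ℝ) :
    box lo hi ∩ {z | c ≤ rc κ z} = box (Function.update lo κ (max (lo κ) c)) hi := by
  ext z
  simp only [box, mem_inter_iff, mem_ofPred_eq]
  constructor
  · rintro ⟨h1, h2⟩ κ'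
    by_cases h : κ' = κ
    · subst h
      simp [h1 κ', h2]
    · simpa [h] using h1 κ'
  · intro h
    have hκ := h κ
    simp only [Function.update_self, max_le_iff] at hκ
    refine ⟨fun κ' => ?_, hκ.1.2⟩
    by_cases h' : κ' = κ
    · subst h'
      exact ⟨hκ.1.1, hκ.2⟩
    · simpa [h'] using h κ'

lemma IsPolyhedron.inter_box {m : ℕ} {Q : Set (ι → ℂ)} (h : IsPolyhedron m Q)
    (lo hi : ι × Bool → ℝ) : IsPolyhedron m (Q ∩ box lo hi) :=
  h.inter fun lo' hi' => ⟨_, _, box_inter_box lo' hi' lo hi⟩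

omit [Fintype ι] in
lemma setOf_eq_inter (κ : ι × Bool) (c : ℝ) :
    {z : ι → ℂ | rc κ z = c} = {z | rc κ z ≤ c} ∩ {z | c ≤ rc κ z} := by
  ext z
  simp [le_antisymm_iff]

lemma IsPolyhedron.inter_eq {m : ℕ} {Q : Set (ι → ℂ)} (h : IsPolyhedron m Q)
    (κ : ι × Bool) (c : ℝ) : IsPolyhedron m (Q ∩ {z | rc κ z = c}) := by
  classical
  rw [setOf_eq_inter, ← inter_assoc]
  exact (h.inter fun lo hi => ⟨_, _, box_inter_le lo hi κ c⟩).inter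
    fun lo hi => ⟨_, _, box_inter_ge lo hi κ c⟩

lemma differentiable_comp_some :
    Differentiable ℂ (fun (y : Option ι → ℂ) (i : ι) => y (some i)) := by
  rw [differentiable_pi]
  intro i
  fun_prop

lemma IsPolyhedron.cyl : ∀ {m : ℕ} {Q : Set (ι → ℂ)}, IsPolyhedron m Q → IsPolyhedron m (cyl Q)
  | 0, _, ⟨lo, hi, h⟩ => by
    refine ⟨fun κ => κ.1.elim (-1) fun i => lo (i, κ.2),
      fun κ => κ.1.elim 1 fun i => hi (i, κ.2), ?_⟩
    ext y
    rw [h]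
    constructor
    · rintro ⟨h1, h2⟩ ⟨o, b⟩
      cases o with
      | some i =>
        exact h1 (i, b)
      | none =>
        cases b
        · simpa using abs_le.1 h2.1
        · simpa using abs_le.1 h2.2
    · intro hy
      refine ⟨fun κ => hy (some κ.1, κ.2), ?_, ?_⟩
      · simpa [abs_le] using hy (none, false)
      · simpa [abs_le] using hy (none, true)
  | m + 1, _, ⟨Q', p, hQ', hp, h⟩ => by
    refine ⟨_root_.cyl Q', p ∘ fun y i => y (some i), hQ'.cyl,
      hp.comp (Eventually.of_forall fun y => differentiable_comp_some y) fun y hy => hy.1, ?_⟩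
    rw [h]
    ext y
    simp only [_root_.cyl, mem_ofPred_eq, mem_inter_iff, mem_preimage, Function.comp]
    tauto

/-- A solution on `A` of the problem of extending `h` from the zero set of `q`. -/
def HasExtension {E : Type*} [NormedAddCommGroup E] [NormedSpace ℂ E] (q h : E → ℂ)
    (A : Set E) : Prop :=
  ∃ F k : E → ℂ, HolNear F A ∧ HolNear k (A ∩ {y | q y = 0}) ∧
    F - h =ᶠ[𝓝ˢ (A ∩ {y | q y = 0})] q * k

lemma exists_nhds_hasExtension {E : Type*} [NormedAddCommGroup E] [NormedSpace ℂ E] {q h : E → ℂ}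
    {D : Set E} (hq : HolNear q D) (hh : HolNear h (D ∩ {y | q y = 0})) {x : E} (hx : x ∈ D) :
    ∃ U, IsOpen U ∧ x ∈ U ∧ ∀ A ⊆ U, HasExtension q h A := by
  by_cases hqx : q x = 0
  · obtain ⟨U, hU, hUo, hxU⟩ := _root_.eventually_nhds_iff.1 (hh.at_mem (x := x) ⟨hx, hqx⟩)
    refine ⟨U, hUo, hxU, fun A hA => ⟨h, 0, ?_, HolNear.of_differentiable (differentiable_const _),
      by simp⟩⟩
    exact HolNear.of_forall fun y hy => (hUo.eventually_mem (hA hy)).mono hU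
  · have hc := (hq.at_mem hx).self_of_nhds.continuousAt
    obtain ⟨U, hU, hUo, hxU⟩ := _root_.eventually_nhds_iff.1 (hc.eventually_ne hqx)
    refine ⟨U, hUo, hxU, fun A hA => ⟨0, 0, HolNear.of_differentiable (differentiable_const _),
      HolNear.of_differentiable (differentiable_const _), ?_⟩⟩
    have : A ∩ {y | q y = 0} = ∅ := by
      ext y
      simp only [mem_inter_iff, mem_ofPred_eq, mem_empty_iff_false, iff_false, not_and]
      exact fun hy => hU y (hA hy)
    rw [this]
    simp [EventuallyEq]

lemma HasExtension.mono {E : Type*} [NormedAddCommGroup E] [NormedSpace ℂ E] {q h : E → ℂ}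
    {A B : Set E} (hB : HasExtension q h B) (hAB : A ⊆ B) : HasExtension q h A := by
  obtain ⟨F, k, hF, hk, he⟩ := hB
  have := inter_subset_inter_left {y | q y = 0} hAB
  exact ⟨F, k, hF.mono hAB, hk.mono this, he.filter_mono (nhdsSet_mono this)⟩

lemma HasExtension.merge [DecidableEq ι] {m : ℕ} (hS : SplitProp m) {P : Set (ι → ℂ)}
    (hP : IsPolyhedron m P) {q h : (ι → ℂ) → ℂ} (hq : HolNear q P) (κ : ι × Bool) (c : ℝ)
    (h₁ : HasExtension q h (P ∩ {z | rc κ z ≤ c})) (h₂ : HasExtension q h (P ∩ {z | c ≤ rc κ z})) :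
    HasExtension q h P := by
  classical
  set A₁ := P ∩ {z | rc κ z ≤ c} with hA₁
  set A₂ := P ∩ {z | c ≤ rc κ z} with hA₂
  set Z := {y | q y = 0} with hZ
  have hPc := hP.isCompact
  have hA₁c : IsCompact A₁ := hPc.inter_right (isClosed_le (continuous_rc κ) continuous_const)
  have hA₂c : IsCompact A₂ := hPc.inter_right (isClosed_le continuous_const (continuous_rc κ))
  have hPZ : IsCompact (P ∩ Z) := hPc.of_isClosed_subset
    (hq.continuousOn.preimage_isClosed_of_isClosed hPc.isClosed isClosed_singleton)
    inter_subset_left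
  have hA₁Z : IsCompact (A₁ ∩ Z) := by
    rw [hA₁, inter_right_comm]
    exact hPZ.inter_right (isClosed_le (continuous_rc κ) continuous_const)
  have hA₂Z : IsCompact (A₂ ∩ Z) := by
    rw [hA₂, inter_right_comm]
    exact hPZ.inter_right (isClosed_le continuous_const (continuous_rc κ))
  have hA : P ∩ {z | rc κ z = c} = A₁ ∩ A₂ := by
    rw [setOf_eq_inter, hA₁, hA₂, ← inter_inter_distrib_left]
  have hAU : P = A₁ ∪ A₂ := by
    rw [hA₁, hA₂, ← inter_union_distrib_left, eq_comm, inter_eq_left]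
    exact fun z _ => le_total (rc κ z) c
  obtain ⟨F₁, k₁, hF₁, hk₁, he₁⟩ := h₁
  obtain ⟨F₂, k₂, hF₂, hk₂, he₂⟩ := h₂
  set g : (ι → ℂ) → ℂ := fun y => if q y = 0 then k₁ y - k₂ y else (F₁ y - F₂ y) / q y with hg
  have hgk : ∀ x ∈ A₁ ∩ A₂ ∩ Z, F₁ - F₂ =ᶠ[𝓝 x] q * g ∧ g =ᶠ[𝓝 x] k₁ - k₂ := by
    rintro x ⟨⟨hx1, hx2⟩, hxZ⟩
    have e1 := eventually_nhdsSet_iff_forall.1 he₁ x ⟨hx1, hxZ⟩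
    have e2 := eventually_nhdsSet_iff_forall.1 he₂ x ⟨hx2, hxZ⟩
    constructor
    · filter_upwards [e1, e2] with y h1 h2
      simp only [Pi.sub_apply, Pi.mul_apply] at h1 h2 ⊢
      by_cases hy : q y = 0
      · simp only [hy, zero_mul] at h1 h2 ⊢
        linear_combination h1 - h2
      · simp only [hg, if_neg hy]
        field_simp
    · filter_upwards [e1, e2] with y h1 h2
      simp only [Pi.sub_apply, Pi.mul_apply] at h1 h2 ⊢
      by_cases hy : q y = 0
      · simp only [hg, if_pos hy]
      · simp only [hg, if_neg hy]
        field_simp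
        linear_combination h1 - h2
  have hgk' : ∀ x ∈ A₁ ∩ A₂, F₁ - F₂ =ᶠ[𝓝 x] q * g := by
    intro x hx
    by_cases hxZ : q x = 0
    · exact (hgk x ⟨hx, hxZ⟩).1
    · have hc := (hq.at_mem hx.1.1).self_of_nhds.continuousAt
      filter_upwards [hc.eventually_ne hxZ] with y hy
      simp only [Pi.sub_apply, Pi.mul_apply, hg, if_neg hy]
      field_simp
  have hghol : HolNear g (P ∩ {z | rc κ z = c}) := by
    rw [hA]
    refine HolNear.of_forall fun x hx => ?_
    by_cases hxZ : q x = 0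
    · filter_upwards [(hgk x ⟨hx, hxZ⟩).2.eventuallyEq_nhds, hk₁.at_mem ⟨hx.1, hxZ⟩,
        hk₂.at_mem ⟨hx.2, hxZ⟩] with y h1 h2 h3
      exact (h2.sub h3).congr_of_eventuallyEq h1
    · have hc := (hq.at_mem hx.1.1).self_of_nhds.continuousAt
      filter_upwards [(hc.eventually_ne hxZ).eventually_nhds, hq.at_mem hx.1.1,
        hF₁.at_mem hx.1, hF₂.at_mem hx.2] with y h1 h2 h3 h4
      have h5 : DifferentiableAt ℂ ((F₁ - F₂) * q⁻¹) y := (h3.sub h4).mul (h2.inv h1.self_of_nhds)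
      refine h5.congr_of_eventuallyEq ?_
      filter_upwards [h1] with z hz
      simp only [hg, if_neg hz, Pi.mul_apply, Pi.sub_apply, Pi.inv_apply, div_eq_mul_inv]
  obtain ⟨g₁, g₂, hg₁, hg₂, hge⟩ := hS ι P hP κ c g hghol
  rw [hA] at hge
  obtain ⟨F, hFA₁, hFA₂⟩ := exists_glue hA₁c hA₂c (f := F₁ - q * g₁) (g := F₂ - q * g₂) (by
    refine eventually_nhdsSet_iff_forall.2 fun x hx => ?_
    filter_upwards [hgk' x hx, eventually_nhdsSet_iff_forall.1 hge x hx] with y h1 h2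
    simp only [Pi.sub_apply, Pi.mul_apply] at h1 h2 ⊢
    rw [← h2] at h1
    linear_combination h1)
  obtain ⟨k, hkA₁, hkA₂⟩ := exists_glue hA₁Z hA₂Z (f := k₁ - g₁) (g := k₂ - g₂) (by
    refine eventually_nhdsSet_iff_forall.2 fun x hx => ?_
    filter_upwards [(hgk x ⟨⟨hx.1.1, hx.2.1⟩, hx.1.2⟩).2,
      eventually_nhdsSet_iff_forall.1 hge x ⟨hx.1.1, hx.2.1⟩] with y h1 h2
    simp only [Pi.sub_apply] at h1 h2 ⊢
    linear_combination -h1 - h2)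
  have hqA₁ : HolNear q A₁ := hq.mono inter_subset_left
  have hqA₂ : HolNear q A₂ := hq.mono inter_subset_left
  refine ⟨F, k, ?_, ?_, ?_⟩
  · rw [hAU]
    exact ((hF₁.sub (hqA₁.mul hg₁)).congr hFA₁).union ((hF₂.sub (hqA₂.mul hg₂)).congr hFA₂)
  · rw [hAU, union_inter_distrib_right]
    exact ((hk₁.sub (hg₁.mono inter_subset_left)).congr hkA₁).union
      ((hk₂.sub (hg₂.mono inter_subset_left)).congr hkA₂)
  · rw [hAU, union_inter_distrib_right]
    refine Filter.Eventually.union ?_ ?_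
    · filter_upwards [he₁, hFA₁.filter_mono (nhdsSet_mono inter_subset_left), hkA₁]
        with y h1 h2 h3
      simp only [Pi.sub_apply, Pi.mul_apply] at h1 h2 h3 ⊢
      rw [h2, h3]
      linear_combination h1
    · filter_upwards [he₂, hFA₂.filter_mono (nhdsSet_mono inter_subset_left), hkA₂]
        with y h1 h2 h3
      simp only [Pi.sub_apply, Pi.mul_apply] at h1 h2 h3 ⊢
      rw [h2, h3]
      linear_combination h1

lemma hasExtension_of_polyhedron [DecidableEq ι] {m : ℕ} (hS : SplitProp m) {D : Set (ι → ℂ)}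
    (hD : IsPolyhedron m D) {q h : (ι → ℂ) → ℂ} (hq : HolNear q D)
    (hh : HolNear h (D ∩ {y | q y = 0})) : HasExtension q h D := by
  classical
  choose! U hUo hxU hU using fun x hx => exists_nhds_hasExtension hq hh (x := x) hx
  obtain ⟨δ, hδ, H⟩ := lebesgue_number_lemma_of_metric (s := D) (c := fun x : D => U x)
    hD.isCompact (fun x => hUo x x.2) (fun x hx => mem_iUnion.2 ⟨⟨x, hx⟩, hxU x hx⟩)
  have base : ∀ lo hi : ι × Bool → ℝ, (∀ κ, hi κ - lo κ ≤ δ / 3) →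
      HasExtension q h (D ∩ box lo hi) := by
    intro lo hi hw
    rcases (D ∩ box lo hi).eq_empty_or_nonempty with he | ⟨x, hxD, hxb⟩
    · rw [he]
      exact ⟨0, 0, HolNear.of_differentiable (differentiable_const _),
        HolNear.of_differentiable (differentiable_const _), by simp [EventuallyEq]⟩
    obtain ⟨y, hy⟩ := H x hxD
    refine hU y y.2 _ (Subset.trans ?_ hy)
    rintro z ⟨_, hz⟩
    rw [mem_ball, dist_pi_lt_iff hδ]
    intro i
    rw [dist_eq_norm]
    refine (Complex.norm_le_abs_re_add_abs_im _).trans_lt ?_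
    have b : ∀ κ, |rc κ z - rc κ x| ≤ δ / 3 := fun κ => by
      have h1 := hz κ
      have h2 := hxb κ
      have h3 := hw κ
      rw [abs_le]
      constructor <;> linarith
    have h1 := b (i, false)
    have h2 := b (i, true)
    simp only [rc_false, rc_true] at h1 h2
    simp only [Complex.sub_re, Complex.sub_im]
    linarith
  have hcut : ∀ (T : Finset (ι × Bool)) (lo hi : ι × Bool → ℝ),
      (∀ κ, κ ∉ T → hi κ - lo κ ≤ δ / 3) → HasExtension q h (D ∩ box lo hi) := by
    intro T
    induction T using Finset.induction_on with
    | empty => exact fun lo hi hw => base lo hi fun κ => hw κ (by simp)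
    | insert κ T hκ ih =>
      have key : ∀ (N : ℕ) (lo hi : ι × Bool → ℝ), (∀ κ', κ' ∉ insert κ T → hi κ' - lo κ' ≤ δ / 3) →
          hi κ - lo κ ≤ N * (δ / 3) → HasExtension q h (D ∩ box lo hi) := by
        intro N
        induction N with
        | zero =>
          intro lo hi hw hN
          refine ih lo hi fun κ' hκ' => ?_
          by_cases hk : κ' = κ
          · subst hk
            simp at hN
            linarith
          · exact hw κ' (by simp [hk, hκ'])
        | succ N ihN =>
          intro lo hi hw hN
          push_cast at hN
          refine HasExtension.merge hS (hD.inter_box lo hi) (hq.mono inter_subset_left) κ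
            (lo κ + δ / 3) ?_ ?_
          · rw [inter_assoc, box_inter_le]
            refine ih _ _ fun κ' hκ' => ?_
            by_cases hk : κ' = κ
            · subst hk
              simp only [Function.update_self]
              linarith [min_le_right (hi κ') (lo κ' + δ / 3)]
            · simpa only [Function.update_of_ne hk] using hw κ' (by simp [hk, hκ'])
          · rw [inter_assoc, box_inter_ge]
            refine ihN _ _ (fun κ' hκ' => ?_) ?_
            · have hk : κ' ≠ κ := fun h => hκ' (by simp [h])
              simpa only [Function.update_of_ne hk] using hw κ' hκ'
            · simp only [Function.update_self]
              linarith [le_max_right (lo κ) (lo κ + δ / 3)]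
      intro lo hi hw
      obtain ⟨N, hN⟩ := exists_nat_ge ((hi κ - lo κ) / (δ / 3))
      exact key N lo hi hw (by rwa [div_le_iff₀ (by positivity)] at hN)
  obtain ⟨R, hR⟩ := hD.isCompact.isBounded.exists_norm_le
  refine (hcut Finset.univ (fun _ => -R) (fun _ => R) (by simp)).mono fun z hz => ⟨hz, fun κ => ?_⟩
  exact abs_le.1 ((abs_rc_le κ z).trans ((norm_le_pi_norm z κ.1).trans (hR z hz)))

lemma differentiableAt_graphMap {p : (ι → ℂ) → ℂ} {z : ι → ℂ} (h : DifferentiableAt ℂ p z) :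
    DifferentiableAt ℂ (graphMap p) z := by
  rw [differentiableAt_pi]
  intro o
  cases o with
  | none => exact h
  | some i => exact differentiableAt_apply (𝕜 := ℂ) i z

lemma HolNear.comp_graphMap {Q : Set (ι → ℂ)} {R : Set (Option ι → ℂ)} {p : (ι → ℂ) → ℂ}
    {G : (Option ι → ℂ) → ℂ} (hG : HolNear G R) (hp : HolNear p Q) (hm : MapsTo (graphMap p) Q R) :
    HolNear (G ∘ graphMap p) Q :=
  hG.comp (Filter.Eventually.mono hp fun _ h => differentiableAt_graphMap h) hm

lemma tendsto_graphMap {Q : Set (ι → ℂ)} {R : Set (Option ι → ℂ)} {p : (ι → ℂ) → ℂ}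
    (hp : HolNear p Q) (hm : MapsTo (graphMap p) Q R) : Tendsto (graphMap p) (𝓝ˢ Q) (𝓝ˢ R) :=
  tendsto_nhdsSet_of_mapsTo (fun _ hx =>
    (differentiableAt_graphMap (hp.at_mem hx).self_of_nhds).continuousAt) hm

/-- Oka's extension from the graph of `p` to the cylinder. -/
lemma SplitProp.exists_extension {m : ℕ} (hS : SplitProp m) {Q : Set (ι → ℂ)}
    (hQ : IsPolyhedron m Q) {p f : (ι → ℂ) → ℂ} (hp : HolNear p Q)
    (hf : HolNear f (Q ∩ p ⁻¹' unitSquare)) :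
    ∃ F : (Option ι → ℂ) → ℂ, HolNear F (cyl Q) ∧
      F ∘ graphMap p =ᶠ[𝓝ˢ (Q ∩ p ⁻¹' unitSquare)] f := by
  classical
  set π : (Option ι → ℂ) → ι → ℂ := fun y i => y (some i) with hπ
  have hπd : Differentiable ℂ π := differentiable_comp_some
  obtain ⟨F, k, hF, -, he⟩ := hasExtension_of_polyhedron hS hQ.cyl (q := fun y => y none - p (π y))
    (h := f ∘ π)
    (HolNear.sub (HolNear.of_differentiable (by fun_prop))
      (hp.comp (Eventually.of_forall fun y => hπd y) fun y hy => hy.1))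
    (hf.comp (Eventually.of_forall fun y => hπd y) fun y hy => ⟨hy.1.1, by
      have h1 : y none - p (π y) = 0 := hy.2
      rw [mem_preimage, ← sub_eq_zero.1 h1]
      exact hy.1.2⟩)
  refine ⟨F, hF, ?_⟩
  have ht := tendsto_graphMap (R := cyl Q ∩ {y | y none - p (π y) = 0})
    (hp.mono (inter_subset_left (t := p ⁻¹' unitSquare))) (fun z hz => ⟨hz, by simp [graphMap, hπ]⟩)
  filter_upwards [ht.eventually he] with z hz
  simp only [graphMap, Pi.sub_apply, Pi.mul_apply, Function.comp, hπ, Option.elim, sub_self,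
    zero_mul] at hz
  exact sub_eq_zero.1 hz

lemma splitProp : ∀ m, SplitProp m
  | 0 => by
    rintro ι _ _ _ ⟨lo, hi, rfl⟩ κ c g hg
    exact exists_split_box lo hi κ c hg
  | m + 1 => by
    rintro ι _ _ _ ⟨Q, p, hQ, hp, rfl⟩ κ c g hg
    rw [inter_right_comm] at hg
    have hpT : HolNear p (Q ∩ {z | rc κ z = c}) := hp.mono inter_subset_left
    obtain ⟨G, hG, hGe⟩ := (splitProp m).exists_extension (hQ.inter_eq κ c) hpT hg
    obtain ⟨G₁, G₂, hG₁, hG₂, hGs⟩ := splitProp m (Option ι) (cyl Q) hQ.cyl (some κ.1, κ.2) c G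
      (hG.mono fun y hy => ⟨⟨hy.1.1, hy.2⟩, hy.1.2⟩)
    refine ⟨G₁ ∘ graphMap p, G₂ ∘ graphMap p, ?_, ?_, ?_⟩
    · exact hG₁.comp_graphMap (hp.mono fun z hz => hz.1.1) fun z hz => ⟨⟨hz.1.1, hz.1.2⟩, hz.2⟩
    · exact hG₂.comp_graphMap (hp.mono fun z hz => hz.1.1) fun z hz => ⟨⟨hz.1.1, hz.1.2⟩, hz.2⟩
    · rw [inter_right_comm]
      have ht := tendsto_graphMap (Q := Q ∩ {z | rc κ z = c} ∩ p ⁻¹' unitSquare)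
        (R := cyl Q ∩ {y | rc (some κ.1, κ.2) y = c})
        (hp.mono fun z hz => hz.1.1) fun z hz => ⟨⟨hz.1.1, hz.2⟩, hz.1.2⟩
      filter_upwards [ht.eventually hGs, hGe] with z h1 h2
      rw [← h2]
      exact h1

end Polyhedra

section Approximation

variable {E E' : Type*} [NormedAddCommGroup E] [NormedSpace ℂ E]
  [NormedAddCommGroup E'] [NormedSpace ℂ E'] {Ω Z Q : Set E}

/-- `f` is uniformly approximable on `Z` by functions holomorphic on `Ω`. -/
def Approximable (Ω Z : Set E) (f : E → ℂ) : Prop :=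
  ∀ ε > 0, ∃ F, DifferentiableOn ℂ F Ω ∧ ∀ z ∈ Z, ‖f z - F z‖ < ε

namespace Approximable

variable {f g : E → ℂ}

lemma of_differentiableOn (hf : DifferentiableOn ℂ f Ω) : Approximable Ω Z f :=
  fun ε hε => ⟨f, hf, fun z _ => by simpa using hε⟩

lemma congr (hf : Approximable Ω Z f) (h : ∀ z ∈ Z, g z = f z) : Approximable Ω Z g := by
  intro ε hε
  obtain ⟨F, hF, hFf⟩ := hf ε hε
  exact ⟨F, hF, fun z hz => by rw [h z hz]; exact hFf z hz⟩

lemma add (hf : Approximable Ω Z f) (hg : Approximable Ω Z g) : Approximable Ω Z (f + g) := by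
  intro ε hε
  obtain ⟨F, hF, hFf⟩ := hf (ε / 2) (by positivity)
  obtain ⟨G, hG, hGg⟩ := hg (ε / 2) (by positivity)
  refine ⟨F + G, hF.add hG, fun z hz => ?_⟩
  have h : (f + g) z - (F + G) z = (f z - F z) + (g z - G z) := by simp; ring
  rw [h]
  exact (norm_add_le _ _).trans_lt (by linarith [hFf z hz, hGg z hz])

lemma mul_differentiableOn (hf : Approximable Ω Z f) (hg : DifferentiableOn ℂ g Ω) {C : ℝ}
    (hC : ∀ z ∈ Z, ‖g z‖ ≤ C) : Approximable Ω Z (f * g) := by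
  intro ε hε
  obtain ⟨F, hF, hFf⟩ := hf (ε / (|C| + 1)) (by positivity)
  refine ⟨F * g, hF.mul hg, fun z hz => ?_⟩
  have h : (f * g) z - (F * g) z = (f z - F z) * g z := by simp; ring
  rw [h, norm_mul]
  have h1 := hFf z hz
  have h2 : ‖g z‖ < |C| + 1 := by linarith [hC z hz, le_abs_self C]
  have h3 : ε = ε / (|C| + 1) * (|C| + 1) := by field_simp
  rw [h3]
  exact mul_lt_mul'' h1 h2 (norm_nonneg _) (norm_nonneg _)

lemma sum {s : ℕ → E → ℂ} (hs : ∀ k, Approximable Ω Z (s k)) (N : ℕ) :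
    Approximable Ω Z (fun z => ∑ k ∈ Finset.range N, s k z) := by
  induction N with
  | zero => simpa using of_differentiableOn (differentiableOn_const (0 : ℂ))
  | succ N ih =>
    simp only [Finset.sum_range_succ]
    exact ih.add (hs N)

lemma of_forall (h : ∀ ε > 0, ∃ g, Approximable Ω Z g ∧ ∀ z ∈ Z, ‖f z - g z‖ < ε) :
    Approximable Ω Z f := by
  intro ε hε
  obtain ⟨g, hg, hfg⟩ := h (ε / 2) (by positivity)
  obtain ⟨F, hF, hFg⟩ := hg (ε / 2) (by positivity)
  refine ⟨F, hF, fun z hz => ?_⟩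
  have h : f z - F z = (f z - g z) + (g z - F z) := by ring
  rw [h]
  exact (norm_add_le _ _).trans_lt (by linarith [hfg z hz, hFg z hz])

end Approximable

/-- Expanding `F (Φ s z)` in powers of `s` and substituting `s = q z`. -/
lemma approximable_of_taylor [FiniteDimensional ℂ E] (hZ : IsCompact Z) (hZQ : Z ⊆ Q) (hZΩ : Z ⊆ Ω)
    (hQ : ∀ c, HolNear c Q → Approximable Ω Z c) {q : E → ℂ} (hq : DifferentiableOn ℂ q Ω) {r : ℝ}
    (hr : 0 < r) (hqZ : ∀ z ∈ Z, ‖q z‖ ≤ r / 2) {F : E' → ℂ} {R : Set E'} (hF : HolNear F R)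
    {Φ : ℂ → E → E'} (hΦ : Continuous (Function.uncurry Φ)) (hΦE : ∀ s, Differentiable ℂ (Φ s))
    (hΦs : ∀ z, Differentiable ℂ fun s => Φ s z)
    (hΦR : ∀ s ∈ closedBall (0 : ℂ) r, ∀ z ∈ Q, Φ s z ∈ R) :
    Approximable Ω Z (fun z => F (Φ (q z) z)) := by
  lift r to NNReal using hr.le
  obtain ⟨V, hV, hRV, hFV⟩ := hF.exists_isOpen
  have hFc : ContinuousOn F V := fun x hx => (hFV x hx).continuousAt.continuousWithinAt
  obtain ⟨M, hM⟩ := ((isCompact_closedBall (0 : ℂ) r).prod hZ).exists_bound_of_continuousOn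
    (f := fun p => F (Φ p.1 p.2)) (hFc.comp hΦ.continuousOn
      fun p hp => hRV (hΦR p.1 hp.1 p.2 (hZQ hp.2)))
  rcases Z.eq_empty_or_nonempty with rfl | ⟨z₀, hz₀⟩
  · exact fun ε hε => ⟨0, differentiableOn_const _, by simp⟩
  have hM0 : 0 ≤ M := (norm_nonneg _).trans
    (hM (0, z₀) ⟨mem_closedBall_self hr.le, hz₀⟩)
  set a : ℕ → E → ℂ := fun k z =>
    (2 * Real.pi * Complex.I : ℂ)⁻¹ • ∮ s in C(0, r), (s - 0)⁻¹ ^ k • (s - 0)⁻¹ • F (Φ s z) with ha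
  have hahol : ∀ k, HolNear (a k) Q := by
    intro k
    refine HolNear.of_forall fun z hz => ?_
    have hd : Continuous (deriv (circleMap 0 r)) := by
      rw [show deriv (circleMap 0 r) = fun θ => circleMap 0 r θ * Complex.I from
        funext fun θ => deriv_circleMap 0 r θ]
      fun_prop
    have hi : Continuous fun θ : ℝ => (circleMap 0 r θ - 0)⁻¹ :=
      Continuous.inv₀ (by fun_prop) fun θ => by simpa using hr.ne'
    have hΦθ : Continuous fun p : ℝ × E => Φ (circleMap 0 r p.1) p.2 :=
      hΦ.comp (f := fun p : ℝ × E => (circleMap 0 r p.1, p.2)) (by fun_prop)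
    have := eventually_differentiableAt_intervalIntegral (a := 0) (b := 2 * Real.pi) (z₀ := z)
      (h := fun θ z => deriv (circleMap 0 r) θ • (circleMap 0 r θ - 0)⁻¹ ^ k •
        (circleMap 0 r θ - 0)⁻¹ • F (Φ (circleMap 0 r θ) z))
      (O := (fun p : ℝ × E => Φ (circleMap 0 r p.1) p.2) ⁻¹' V) (hV.preimage hΦθ)
      (fun θ _ => hRV (hΦR _ (circleMap_mem_closedBall _ hr.le _) z hz))
      (((hd.comp continuous_fst).continuousOn).smul (((hi.comp continuous_fst).pow k).continuousOn.smul
        ((hi.comp continuous_fst).continuousOn.smul (hFc.comp hΦθ.continuousOn fun p hp => hp))))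
      (fun p hp => by
        have h1 : DifferentiableAt ℂ (fun z => F (Φ (circleMap 0 r p.1) z)) p.2 :=
          DifferentiableAt.comp p.2 (hFV _ hp) (hΦE _ p.2)
        exact ((h1.const_smul (_ : ℂ)).const_smul (_ : ℂ)).const_smul (_ : ℂ))
    filter_upwards [this] with y hy
    exact hy.const_smul (2 * Real.pi * Complex.I : ℂ)⁻¹
  have hser : ∀ z ∈ Z, HasSum (fun k => a k z * q z ^ k) (F (Φ (q z) z)) ∧
      ∀ k, ‖a k z * q z ^ k‖ ≤ M * (1 / 2) ^ k := by
    intro z hz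
    have hdz : DifferentiableOn ℂ (fun s => F (Φ s z)) (closedBall 0 r) :=
      fun s hs => (DifferentiableAt.comp s (hFV _ (hRV (hΦR s hs z (hZQ hz))))
        (hΦs z s)).differentiableWithinAt
    have hps := hdz.hasFPowerSeriesOnBall (NNReal.coe_pos.1 hr)
    have hterm : ∀ k, (cauchyPowerSeries (fun s => F (Φ s z)) 0 r k
        fun _ => q z) = a k z * q z ^ k := by
      intro k
      simp only [cauchyPowerSeries, ContinuousMultilinearMap.mkPiRing_apply, Fin.prod_const, ha,
        smul_eq_mul]
      rw [mul_comm]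
    have hqz := hqZ z hz
    constructor
    · have := hps.hasSum_sub (y := q z) (by
        rw [Metric.eball_coe, mem_ball_zero_iff]
        exact hqz.trans_lt (by simpa using hr))
      simpa only [sub_zero, hterm] using this
    · intro k
      rw [← hterm]
      refine (ContinuousMultilinearMap.le_opNorm _ _).trans ?_
      have hle := norm_cauchyPowerSeries_le (fun s => F (Φ s z)) 0 r k
      have hI : (2 * Real.pi)⁻¹ * ∫ θ : ℝ in 0..2 * Real.pi, ‖F (Φ (circleMap 0 r θ) z)‖ ≤ M := by
        have h1 := intervalIntegral.norm_integral_le_of_norm_le_const (a := 0) (b := 2 * Real.pi)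
          (f := fun θ => ‖F (Φ (circleMap 0 r θ) z)‖) (C := M) fun θ _ => by
            rw [norm_norm]
            exact hM (circleMap 0 r θ, z) ⟨circleMap_mem_closedBall _ hr.le _, hz⟩
        rw [sub_zero, abs_of_pos Real.two_pi_pos] at h1
        have h2 := (Real.le_norm_self _).trans h1
        rw [inv_mul_le_iff₀ Real.two_pi_pos]
        linarith
      rw [Finset.prod_const, Finset.card_univ, Fintype.card_fin]
      have h3 : ‖cauchyPowerSeries (fun s => F (Φ s z)) 0 r k‖ ≤ M * (r : ℝ)⁻¹ ^ k := by
        refine hle.trans ?_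
        rw [abs_of_pos hr]
        gcongr
      calc _ ≤ M * (r : ℝ)⁻¹ ^ k * (r / 2) ^ k := by
            gcongr
        _ = M * (1 / 2) ^ k := by
            rw [mul_assoc, ← mul_pow]
            congr 2
            field_simp
  refine Approximable.of_forall fun ε hε => ?_
  obtain ⟨N, hN⟩ := exists_pow_lt_of_lt_one (show 0 < ε / (2 * M + 1) by positivity)
    (show (1 / 2 : ℝ) < 1 by norm_num)
  refine ⟨fun z => ∑ k ∈ Finset.range N, a k z * q z ^ k, Approximable.sum (fun k => ?_) N,
    fun z hz => ?_⟩
  · exact (hQ _ (hahol k)).mul_differentiableOn (hq.pow k) (C := (r / 2) ^ k) fun z hz => by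
      simp only [norm_pow]
      gcongr
      exact hqZ z hz
  · obtain ⟨h1, h2⟩ := hser z hz
    have := norm_sub_le_of_geometric_bound_of_hasSum (by norm_num) h2 h1 N
    rw [norm_sub_rev]
    refine this.trans_lt ?_
    rw [lt_div_iff₀ (by positivity)] at hN
    have h4 : (0 : ℝ) < (1 / 2) ^ N := by positivity
    have : M * (1 / 2) ^ N / (1 - 1 / 2) = (1 / 2) ^ N * (2 * M) := by ring
    rw [this]
    nlinarith

variable {ι : Type} [Fintype ι]

/-- Analytic polyhedra containing `Z` whose defining functions are holomorphic on `Ω` and small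
on `Z`. -/
def IsOkaPolyhedron (Ω Z : Set (ι → ℂ)) : ℕ → Set (ι → ℂ) → Prop
  | 0, Q => ∃ R > 0, Q = box (fun _ => -R) (fun _ => R) ∧ ∀ z ∈ Z, ∀ i, ‖z i‖ ≤ R / 2
  | m + 1, Q => ∃ (Q' : Set (ι → ℂ)) (p : (ι → ℂ) → ℂ), IsOkaPolyhedron Ω Z m Q' ∧
      DifferentiableOn ℂ p Ω ∧ HolNear p Q' ∧ (∀ z ∈ Z, ‖p z‖ ≤ 1 / 2) ∧
      Q = Q' ∩ p ⁻¹' unitSquare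

variable {Ω Z : Set (ι → ℂ)}

lemma IsOkaPolyhedron.isPolyhedron : ∀ {m : ℕ} {Q : Set (ι → ℂ)}, IsOkaPolyhedron Ω Z m Q →
    IsPolyhedron m Q
  | 0, _, ⟨_, _, h, _⟩ => ⟨_, _, h⟩
  | _ + 1, _, ⟨Q', p, h, _, hp, _, hQ⟩ => ⟨Q', p, h.isPolyhedron, hp, hQ⟩

lemma mem_unitSquare_of_norm_le {w : ℂ} (hw : ‖w‖ ≤ 1) : w ∈ unitSquare :=
  ⟨(Complex.abs_re_le_norm w).trans hw, (Complex.abs_im_le_norm w).trans hw⟩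

lemma norm_le_of_mem_unitSquare {w : ℂ} (hw : w ∈ unitSquare) : ‖w‖ < 2 := by
  rw [← abs_of_nonneg (norm_nonneg w), ← abs_of_pos (zero_lt_two' ℝ), ← sq_lt_sq, Complex.sq_norm,
    Complex.normSq_apply]
  nlinarith [abs_le.1 hw.1, abs_le.1 hw.2, sq_abs w.re, sq_abs w.im, hw.1, hw.2, abs_nonneg w.re,
    abs_nonneg w.im]

lemma IsOkaPolyhedron.subset : ∀ {m : ℕ} {Q : Set (ι → ℂ)}, IsOkaPolyhedron Ω Z m Q → Z ⊆ Q
  | 0, _, ⟨R, hR, h, hZ⟩ => fun z hz => by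
    rw [h]
    exact fun κ => abs_le.1 ((abs_rc_le κ z).trans ((hZ z hz κ.1).trans (by linarith)))
  | _ + 1, _, ⟨Q', p, h, _, hp, hpZ, hQ⟩ => fun z hz => by
    rw [hQ]
    exact ⟨h.subset hz, mem_unitSquare_of_norm_le ((hpZ z hz).trans (by norm_num))⟩

lemma approximable_of_box [DecidableEq ι] (hZ : IsCompact Z) (hZΩ : Z ⊆ Ω) {R : ℝ} (hR : 0 < R)
    (hZR : ∀ z ∈ Z, ∀ i, ‖z i‖ ≤ R / 2) (T : Finset ι) :
    ∀ f, HolNear f {z | ∀ j ∈ T, ‖z j‖ ≤ R} → Approximable Ω Z f := by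
  induction T using Finset.induction_on with
  | empty =>
    intro f hf
    refine Approximable.of_differentiableOn (Differentiable.differentiableOn fun z => ?_)
    exact (hf.at_mem (by simp)).self_of_nhds
  | insert j T hj ih =>
    intro f hf
    have hsub : Z ⊆ {z | ∀ j ∈ T, ‖z j‖ ≤ R} := fun z hz i _ => by
      have := hZR z hz i
      linarith
    have hq : DifferentiableOn ℂ (fun z : ι → ℂ => z j) Ω := by fun_prop
    have := approximable_of_taylor hZ hsub hZΩ ih hq hR (fun z hz => hZR z hz j) hf
      (Φ := fun s z => Function.update z j s)
      (continuous_snd.update j continuous_fst) (fun s => differentiable_update_left j s)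
      (fun z => ?_) ?_
    · simpa only [Function.update_eq_self] using this
    · rw [differentiable_pi]
      intro i
      by_cases h : i = j
      · subst h
        simp
      · simp [h]
    · intro s hs z hz i hi
      by_cases h : i = j
      · subst h
        simpa using hs
      · simp only [Function.update_of_ne h]
        exact hz i (Finset.mem_of_mem_insert_of_ne hi h)

/-- The Oka–Weil approximation theorem on an Oka polyhedron. -/
theorem IsOkaPolyhedron.approximable (hZ : IsCompact Z) (hZΩ : Z ⊆ Ω) :
    ∀ {m : ℕ} {Q : Set (ι → ℂ)}, IsOkaPolyhedron Ω Z m Q →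
      ∀ f, HolNear f Q → Approximable Ω Z f
  | 0, _, ⟨R, hR, h, hZR⟩ => fun f hf => by
    classical
    have hQ : {z : ι → ℂ | ∀ j ∈ Finset.univ, ‖z j‖ ≤ R} ⊆ box (fun _ => -R) (fun _ => R) :=
      fun z hz κ => abs_le.1 ((abs_rc_le κ z).trans (hz κ.1 (Finset.mem_univ _)))
    rw [h] at hf
    exact approximable_of_box hZ hZΩ hR hZR Finset.univ f (hf.mono hQ)
  | m + 1, _, ⟨Q, p, hQ, hpΩ, hp, hpZ, h⟩ => fun f hf => by
    rw [h] at hf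
    obtain ⟨F, hF, hFf⟩ := (splitProp m).exists_extension hQ.isPolyhedron hp hf
    have := approximable_of_taylor hZ hQ.subset hZΩ (IsOkaPolyhedron.approximable hZ hZΩ hQ) hpΩ
      one_pos hpZ hF (Φ := fun s z o => Option.elim o s z) ?_ ?_ ?_ ?_
    · exact this.congr fun z hz => (hFf.self_of_nhdsSet ⟨hQ.subset hz,
        mem_unitSquare_of_norm_le ((hpZ z hz).trans (by norm_num))⟩).symm
    · refine continuous_pi fun o => ?_
      cases o with
      | none => exact continuous_fst
      | some i => exact (continuous_apply i).comp continuous_snd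
    · intro s
      rw [differentiable_pi]
      rintro (_ | i)
      · exact differentiable_const _
      · exact differentiable_apply (𝕜 := ℂ) i
    · intro z
      rw [differentiable_pi]
      rintro (_ | i)
      · exact differentiable_id
      · exact differentiable_const _
    · exact fun s hs z hz => ⟨hz, mem_unitSquare_of_norm_le (by simpa using hs)⟩

end Approximation

section Separation

lemma exists_exp_separating {E : Type*} [NormedAddCommGroup E] [NormedSpace ℂ E] [NormedSpace ℝ E]
    [IsScalarTower ℝ ℂ E] {Ω C : Set E} (hΩ : IsOpen Ω) (hconv : Convex ℝ Ω) (hC : IsCompact C)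
    (hCΩ : C ⊆ Ω) {b : E} (hb : b ∉ Ω) :
    ∃ p : E → ℂ, Differentiable ℂ p ∧ (∀ z ∈ C, ‖p z‖ ≤ 1 / 2) ∧ 2 ≤ ‖p b‖ := by
  obtain ⟨ℓ, hℓ⟩ := RCLike.geometric_hahn_banach_open_point (𝕜 := ℂ) hconv hΩ hb
  obtain ⟨u, hu, huv⟩ : ∃ u, (∀ z ∈ C, (ℓ z).re ≤ u) ∧ u < (ℓ b).re := by
    rcases C.eq_empty_or_nonempty with rfl | hne
    · exact ⟨(ℓ b).re - 1, by simp, by linarith⟩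
    · obtain ⟨x, hx, hmax⟩ := hC.exists_isMaxOn hne
        (Complex.continuous_re.comp ℓ.continuous).continuousOn
      exact ⟨(ℓ x).re, fun z hz => hmax hz, hℓ x (hCΩ hx)⟩
  set v := (ℓ b).re with hv
  have hd : 0 < v - u := sub_pos.2 huv
  set M : ℝ := 2 * Real.log 2 / (v - u) with hM
  have hM0 : 0 < M := div_pos (by have := Real.log_pos one_lt_two; linarith) hd
  have hMd : M * (v - u) = 2 * Real.log 2 := by rw [hM]; field_simp
  refine ⟨fun z => Complex.exp ((M : ℂ) * (ℓ z - (((u + v) / 2 : ℝ) : ℂ))), ?_, ?_, ?_⟩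
  · have := ℓ.differentiable
    fun_prop
  · intro z hz
    have h := hu z hz
    rw [Complex.norm_exp, Complex.re_ofReal_mul, Complex.sub_re, Complex.ofReal_re]
    have h2 : (1 / 2 : ℝ) = Real.exp (-Real.log 2) := by
      rw [Real.exp_neg, Real.exp_log two_pos]; norm_num
    rw [h2]
    refine Real.exp_le_exp.2 ?_
    have h' : (ℓ z).re - (u + v) / 2 ≤ - (v - u) / 2 := by
      linarith
    nlinarith
  · rw [Complex.norm_exp, Complex.re_ofReal_mul, Complex.sub_re, Complex.ofReal_re]
    nth_rewrite 1 [← Real.exp_log (two_pos : (0 : ℝ) < 2)]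
    refine Real.exp_le_exp.2 ?_
    have h' : (v - u) / 2 ≤ (ℓ b).re - (u + v) / 2 := by
      linarith
    nlinarith

variable {ι : Type} [Fintype ι] {Ω Z : Set (ι → ℂ)}

lemma IsOkaPolyhedron.exists_refinement {m : ℕ} {Q : Set (ι → ℂ)} (hQ : IsOkaPolyhedron Ω Z m Q)
    {W : Set (ι → ℂ)} (hW : IsOpen W)
    (hsep : ∀ b ∈ Q \ W, ∃ p : (ι → ℂ) → ℂ, DifferentiableOn ℂ p Ω ∧ HolNear p Q ∧
      (∀ z ∈ Z, ‖p z‖ ≤ 1 / 2) ∧ 2 ≤ ‖p b‖) :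
    ∃ m' Q', IsOkaPolyhedron Ω Z m' Q' ∧ Q' ⊆ Q ∩ W := by
  have hQc : IsCompact Q := hQ.isPolyhedron.isCompact
  have key := (hQc.diff hW).induction_on (p := fun S => ∀ m' Q', IsOkaPolyhedron Ω Z m' Q' → Q' ⊆ Q →
    ∃ m'' Q'', IsOkaPolyhedron Ω Z m'' Q'' ∧ Q'' ⊆ Q' ∧ Disjoint Q'' S)
    (fun m' Q' h _ => ⟨m', Q', h, Subset.rfl, disjoint_empty _⟩)
    (fun s t hst ht m' Q' h hsub => by
      obtain ⟨m'', Q'', h1, h2, h3⟩ := ht m' Q' h hsub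
      exact ⟨m'', Q'', h1, h2, h3.mono_right hst⟩)
    (fun s t hs ht m' Q' h hsub => by
      obtain ⟨m₁, Q₁, h1, h2, h3⟩ := hs m' Q' h hsub
      obtain ⟨m₂, Q₂, h4, h5, h6⟩ := ht m₁ Q₁ h1 (h2.trans hsub)
      exact ⟨m₂, Q₂, h4, h5.trans h2, disjoint_union_right.2 ⟨h3.mono_left h5, h6⟩⟩)
    (fun b hb => by
      obtain ⟨p, hpΩ, hpQ, hpZ, hpb⟩ := hsep b hb
      have hcont : ContinuousAt p b := (hpQ.at_mem hb.1).self_of_nhds.continuousAt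
      have hbp : p b ∈ unitSquareᶜ := fun h => absurd (norm_le_of_mem_unitSquare h) (not_lt.2 hpb)
      refine ⟨p ⁻¹' unitSquareᶜ, mem_nhdsWithin_of_mem_nhds
        (hcont.preimage_mem_nhds (isClosed_unitSquare.isOpen_compl.mem_nhds hbp)), ?_⟩
      intro m' Q' h hsub
      refine ⟨m' + 1, Q' ∩ p ⁻¹' unitSquare, ⟨Q', p, h, hpΩ, hpQ.mono hsub, hpZ, rfl⟩,
        inter_subset_left, ?_⟩
      rw [Set.disjoint_left]
      rintro y ⟨-, hy⟩ hy'
      exact hy' hy)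
  obtain ⟨m', Q', h1, h2, h3⟩ := key m Q hQ Subset.rfl
  refine ⟨m', Q', h1, fun y hy => ⟨h2 hy, ?_⟩⟩
  by_contra hyW
  exact Set.disjoint_left.1 h3 hy ⟨h2 hy, hyW⟩

/-- The Oka–Weil theorem in `ℂⁿ`, in coordinates. -/
theorem oka_weil_pi (hΩ : IsOpen Ω) (hconv : Convex ℝ Ω) (hZ : IsCompact Z) (hZΩ : Z ⊆ Ω)
    (hsep : ∀ b ∈ Ω \ Z, ∃ p : (ι → ℂ) → ℂ, DifferentiableOn ℂ p Ω ∧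
      (∀ z ∈ Z, ‖p z‖ ≤ 1 / 2) ∧ 2 ≤ ‖p b‖) {f : (ι → ℂ) → ℂ} (hf : HolNear f Z) :
    Approximable Ω Z f := by
  have hQ₀ : ∃ Q₀, IsOkaPolyhedron Ω Z 0 Q₀ := by
    obtain ⟨C, hC⟩ := hZ.isBounded.exists_norm_le
    refine ⟨_, 2 * (|C| + 1), by positivity, rfl, fun z hz i => ?_⟩
    have := (norm_le_pi_norm z i).trans (hC z hz)
    linarith [le_abs_self C]
  obtain ⟨Q₀, hQ₀⟩ := hQ₀
  obtain ⟨m₁, Q₁, hQ₁, hQ₁Ω⟩ := hQ₀.exists_refinement hΩ (fun b hb => by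
    obtain ⟨p, hp, hp1, hp2⟩ := exists_exp_separating hΩ hconv hZ hZΩ hb.2
    exact ⟨p, hp.differentiableOn, .of_differentiable hp, hp1, hp2⟩)
  have hQ₁Ω : Q₁ ⊆ Ω := hQ₁Ω.trans inter_subset_right
  obtain ⟨U, hU, hZU, hfU⟩ := hf.exists_isOpen
  obtain ⟨m₂, Q₂, hQ₂, hQ₂U⟩ := hQ₁.exists_refinement hU (fun b hb => by
    obtain ⟨p, hp, hp1, hp2⟩ := hsep b ⟨hQ₁Ω hb.1, fun h => hb.2 (hZU h)⟩
    exact ⟨p, hp, .of_forall fun x hx => hp.eventually_differentiableAt (hΩ.mem_nhds (hQ₁Ω hx)),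
      hp1, hp2⟩)
  exact hQ₂.approximable hZ hZΩ f (.of_forall fun x hx =>
    (hU.eventually_mem (hQ₂U hx).2).mono hfU)

end Separation

section OkaWeil

variable {E : Type*} [NormedAddCommGroup E] [NormedSpace ℂ E] [NormedSpace ℝ E]
  [IsScalarTower ℝ ℂ E] {ι : Type} [Fintype ι] {Ω : Set E}

/-- The Oka–Weil theorem on convex domains. -/
theorem oka_weil (φ : E ≃L[ℂ] (ι → ℂ)) {Z : Set E} (hΩ : IsOpen Ω) (hconv : Convex ℝ Ω)
    (hZ : IsCompact Z) (hZΩ : Z ⊆ Ω)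
    (hsep : ∀ b ∈ Ω \ Z, ∃ p : E → ℂ, DifferentiableOn ℂ p Ω ∧
      (∀ z ∈ Z, ‖p z‖ ≤ 1 / 2) ∧ 2 ≤ ‖p b‖) {f : E → ℂ} (hf : HolNear f Z) :
    Approximable Ω Z f := by
  have hmaps : MapsTo φ Ω (φ '' Ω) := mapsTo_image _ _
  have hmaps' : MapsTo φ.symm (φ '' Ω) Ω := by
    rintro _ ⟨x, hx, rfl⟩
    simpa using hx
  have hfφ : HolNear (f ∘ φ.symm) (φ '' Z) := .of_forall <| by
    rintro _ ⟨x, hx, rfl⟩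
    have hx' : φ.symm (φ x) ∈ Z := by simpa using hx
    filter_upwards [φ.symm.continuous.continuousAt.eventually (hf.at_mem hx')] with y hy
    exact hy.comp y φ.symm.differentiableAt
  have key := oka_weil_pi (Ω := φ '' Ω) (Z := φ '' Z)
    (φ.toHomeomorph.isOpenMap Ω hΩ)
    (hconv.linear_image (φ.toLinearEquiv.toLinearMap.restrictScalars ℝ))
    (hZ.image φ.continuous) (image_mono hZΩ) (by
      rintro _ ⟨⟨b, hb, rfl⟩, hb'⟩
      obtain ⟨p, hp, hp1, hp2⟩ := hsep b ⟨hb, fun h => hb' (mem_image_of_mem _ h)⟩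
      refine ⟨p ∘ φ.symm, hp.comp φ.symm.differentiable.differentiableOn hmaps', ?_, by simpa⟩
      rintro _ ⟨z, hz, rfl⟩
      simpa using hp1 z hz) hfφ
  intro ε hε
  obtain ⟨F, hF, hFf⟩ := key ε hε
  exact ⟨F ∘ φ, hF.comp φ.differentiable.differentiableOn hmaps,
    fun z hz => by simpa using hFf _ (mem_image_of_mem _ hz)⟩

/-- Disjoint compact sets with holomorphically convex union are separated by a holomorphic
function. -/
theorem exists_separating (φ : E ≃L[ℂ] (ι → ℂ)) {X Y : Set E}
    (hΩ : IsOpen Ω) (hconv : Convex ℝ Ω)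
    (hX : IsCompact X) (hY : IsCompact Y) (hXΩ : X ⊆ Ω) (hYΩ : Y ⊆ Ω) (hXY : Disjoint X Y)
    (hsep : ∀ b ∈ Ω \ (X ∪ Y), ∃ p : E → ℂ, DifferentiableOn ℂ p Ω ∧
      (∀ z ∈ X ∪ Y, ‖p z‖ ≤ 1 / 2) ∧ 2 ≤ ‖p b‖) {ε : ℝ} (hε : 0 < ε) :
    ∃ f : E → ℂ, DifferentiableOn ℂ f Ω ∧ (∀ z ∈ X, ‖f z‖ ≤ ε) ∧ ∀ z ∈ Y, ‖f z - 1‖ ≤ ε := by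
  obtain ⟨U, V, hU, hV, hXU, hYV, hUV⟩ := SeparatedNhds.of_isCompact_isCompact hX hY hXY
  classical
  set e : E → ℂ := fun z => if z ∈ U then 0 else 1 with he
  have heX : ∀ z ∈ U, e z = 0 := fun z hz => by simp [he, hz]
  have heY : ∀ z ∈ V, e z = 1 := fun z hz => by
    have : z ∉ U := fun h => Set.disjoint_left.1 hUV h hz
    simp [he, this]
  have heQ : HolNear e (X ∪ Y) := .of_forall fun x hx => by
    rcases hx with hx | hx
    · filter_upwards [hU.eventually_mem (hXU hx)] with y hy
      exact (differentiableAt_const (0 : ℂ)).congr_of_eventuallyEq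
        ((hU.eventually_mem hy).mono heX)
    · filter_upwards [hV.eventually_mem (hYV hx)] with y hy
      exact (differentiableAt_const (1 : ℂ)).congr_of_eventuallyEq
        ((hV.eventually_mem hy).mono heY)
  obtain ⟨F, hF, hFe⟩ := oka_weil φ hΩ hconv (hX.union hY) (union_subset hXΩ hYΩ) hsep heQ ε hε
  refine ⟨F, hF, fun z hz => ?_, fun z hz => ?_⟩
  · have h := hFe z (Or.inl hz)
    rw [heX z (hXU hz), zero_sub, norm_neg] at h
    exact h.le
  · have h := hFe z (Or.inr hz)
    rw [heY z (hYV hz), norm_sub_rev] at h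
    exact h.le

end OkaWeil

section Hull

variable {E : Type*} [NormedAddCommGroup E] [NormedSpace ℂ E] {Ω K L : Set E}

/-- The hull of `K` with respect to the holomorphic functions on `Ω`. -/
def holHull (Ω K : Set E) : Set E :=
  {x ∈ Ω | ∀ f : E → ℂ, DifferentiableOn ℂ f Ω → ‖f x‖ ≤ ⨆ y : K, ‖f ↑y‖}

lemma mem_holHull_iff (hK : IsCompact K) (hKΩ : K ⊆ Ω) {x : E} :
    x ∈ holHull Ω K ↔ x ∈ Ω ∧ ∀ f : E → ℂ, DifferentiableOn ℂ f Ω → ∀ C, 0 ≤ C →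
      (∀ z ∈ K, ‖f z‖ ≤ C) → ‖f x‖ ≤ C := by
  refine and_congr_right fun _ => forall₂_congr fun f hf => ⟨fun h C hC hKC => ?_, fun h => ?_⟩
  · exact h.trans (Real.iSup_le (fun y => hKC y y.2) hC)
  · refine h _ (Real.iSup_nonneg fun _ => norm_nonneg _) fun z hz => ?_
    have hbdd : BddAbove (range fun y : K => ‖f y‖) := by
      have := (hK.image_of_continuousOn (hf.continuousOn.mono hKΩ).norm).bddAbove
      rwa [image_eq_range] at this
    exact le_ciSup hbdd ⟨z, hz⟩

lemma holHull_subset : holHull Ω K ⊆ Ω := fun _ h => h.1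

lemma subset_holHull (hK : IsCompact K) (hKΩ : K ⊆ Ω) : K ⊆ holHull Ω K := fun _ hx =>
  (mem_holHull_iff hK hKΩ).2 ⟨hKΩ hx, fun _ _ _ _ h => h _ hx⟩

lemma holHull_mono (hK : IsCompact K) (hL : IsCompact L) (hLΩ : L ⊆ Ω) (h : K ⊆ L) :
    holHull Ω K ⊆ holHull Ω L := fun _ hx =>
  (mem_holHull_iff hL hLΩ).2 ⟨hx.1, fun f hf C hC hfC =>
    ((mem_holHull_iff hK (h.trans hLΩ)).1 hx).2 f hf C hC fun z hz => hfC z (h hz)⟩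

lemma exists_small_large_of_notMem_holHull (hK : IsCompact K) (hKΩ : K ⊆ Ω) {x : E} (hx : x ∈ Ω)
    (hxK : x ∉ holHull Ω K) :
    ∃ p : E → ℂ, DifferentiableOn ℂ p Ω ∧ (∀ z ∈ K, ‖p z‖ ≤ 1 / 2) ∧ 2 ≤ ‖p x‖ := by
  rw [mem_holHull_iff hK hKΩ] at hxK
  push Not at hxK
  obtain ⟨f, hf, C, hC, hfC, hfx⟩ := hxK hx
  set D := (C + ‖f x‖) / 2 with hD
  have hD0 : 0 < D := by linarith
  have hr : 1 < ‖f x‖ / D := by rw [one_lt_div hD0]; linarith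
  obtain ⟨N, hN⟩ := pow_unbounded_of_one_lt 4 hr
  refine ⟨fun z => 1 / 2 * (f z / D) ^ N, ?_, fun z hz => ?_, ?_⟩
  · simp only [div_eq_mul_inv]
    exact ((hf.mul_const _).pow N).const_mul _
  · have h1 : ‖f z‖ / D ≤ 1 := by rw [div_le_one hD0]; linarith [hfC z hz]
    have h2 : (‖f z‖ / D) ^ N ≤ 1 := pow_le_one₀ (by positivity) h1
    simp only [norm_mul, norm_pow, norm_div, Complex.norm_real, Real.norm_of_nonneg hD0.le]
    norm_num
    linarith
  · simp only [norm_mul, norm_pow, norm_div, Complex.norm_real, Real.norm_of_nonneg hD0.le]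
    norm_num
    linarith

lemma norm_le_of_mem_holHull (hK : IsCompact K) (hKΩ : K ⊆ Ω) {x : E} (hx : x ∈ holHull Ω K)
    {f : E → ℂ} (hf : DifferentiableOn ℂ f Ω) {C : ℝ} (hC : 0 ≤ C) (hfC : ∀ z ∈ K, ‖f z‖ ≤ C) :
    ‖f x‖ ≤ C :=
  ((mem_holHull_iff hK hKΩ).1 hx).2 f hf C hC hfC

lemma image_mem_holHull (hK : IsCompact K) (hKΩ : K ⊆ Ω) {f : E → ℂ}
    (hf : DifferentiableOn ℂ f Ω) {x : E} (hx : x ∈ holHull Ω K) :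
    f x ∈ holHull univ (f '' K) := by
  rw [mem_holHull_iff (hK.image_of_continuousOn (hf.continuousOn.mono hKΩ)) (subset_univ _)]
  refine ⟨mem_univ _, fun g hg C hC h => ?_⟩
  exact norm_le_of_mem_holHull hK hKΩ hx (hg.comp hf (mapsTo_univ _ _)) hC
    fun z hz => h _ (mem_image_of_mem f hz)

variable [NormedSpace ℝ E] [IsScalarTower ℝ ℂ E] {ι : Type} [Fintype ι]

lemma isCompact_holHull (φ : E ≃L[ℂ] (ι → ℂ)) (hΩ : IsOpen Ω) (hconv : Convex ℝ Ω)
    (hK : IsCompact K) (hKΩ : K ⊆ Ω) : IsCompact (holHull Ω K) := by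
  obtain ⟨C, hC⟩ := (hK.image φ.continuous).isBounded.exists_norm_le
  have hcpt : IsCompact (φ.symm '' closedBall 0 |C|) :=
    (isCompact_closedBall _ _).image φ.symm.continuous
  refine hcpt.of_isClosed_subset ?_ fun x hx => ?_
  · rw [← isOpen_compl_iff, isOpen_iff_mem_nhds]
    intro b hb
    obtain ⟨p, hp, hpb, hpK, hpb2⟩ : ∃ p : E → ℂ, DifferentiableOn ℂ p Ω ∧ ContinuousAt p b ∧
        (∀ z ∈ K, ‖p z‖ ≤ 1 / 2) ∧ 2 ≤ ‖p b‖ := by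
      by_cases hbΩ : b ∈ Ω
      · obtain ⟨p, hp, h1, h2⟩ := exists_small_large_of_notMem_holHull hK hKΩ hbΩ hb
        exact ⟨p, hp, hp.continuousOn.continuousAt (hΩ.mem_nhds hbΩ), h1, h2⟩
      · obtain ⟨p, hp, h1, h2⟩ := exists_exp_separating hΩ hconv hK hKΩ hbΩ
        exact ⟨p, hp.differentiableOn, hp.continuous.continuousAt, h1, h2⟩
    have hlt : ∀ᶠ y in 𝓝 b, 1 / 2 < ‖p y‖ :=
      hpb.norm.eventually_const_lt (by linarith)
    filter_upwards [hlt] with y hy hyK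
    exact absurd (norm_le_of_mem_holHull hK hKΩ hyK hp (by norm_num) hpK) (not_le.2 hy)
  · refine ⟨φ x, ?_, by simp⟩
    rw [mem_closedBall_zero_iff, pi_norm_le_iff_of_nonneg (abs_nonneg C)]
    intro i
    refine norm_le_of_mem_holHull hK hKΩ hx (f := fun y => φ y i) ?_ (abs_nonneg C) fun z hz => ?_
    · exact (differentiable_pi.1 φ.differentiable i).differentiableOn
    · exact (norm_le_pi_norm _ i).trans ((hC _ (mem_image_of_mem _ hz)).trans (le_abs_self C))

lemma holHull_idem (φ : E ≃L[ℂ] (ι → ℂ)) (hΩ : IsOpen Ω) (hconv : Convex ℝ Ω)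
    (hK : IsCompact K) (hKΩ : K ⊆ Ω) : holHull Ω (holHull Ω K) = holHull Ω K := by
  have hc := isCompact_holHull φ hΩ hconv hK hKΩ
  refine Subset.antisymm (fun x hx => ?_) (subset_holHull hc holHull_subset)
  rw [mem_holHull_iff hK hKΩ]
  exact ⟨hx.1, fun f hf C hC h => norm_le_of_mem_holHull hc holHull_subset hx hf hC
    fun z hz => norm_le_of_mem_holHull hK hKΩ hz hf hC h⟩

/-- Compact sets with disjoint hulls, the union of which is the hull of the union, are separated
by a holomorphic function. -/
theorem exists_separating_of_holHull (φ : E ≃L[ℂ] (ι → ℂ)) (hΩ : IsOpen Ω) (hconv : Convex ℝ Ω)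
    (hK : IsCompact K) (hKΩ : K ⊆ Ω) (hL : IsCompact L) (hLΩ : L ⊆ Ω)
    (hdisj : Disjoint (holHull Ω K) (holHull Ω L))
    (hunion : holHull Ω (K ∪ L) ⊆ holHull Ω K ∪ holHull Ω L) {ε : ℝ} (hε : 0 < ε) :
    ∃ f : E → ℂ, DifferentiableOn ℂ f Ω ∧ (∀ z ∈ K, ‖f z‖ ≤ ε) ∧ ∀ z ∈ L, ‖f z - 1‖ ≤ ε := by
  have hKL := hK.union hL
  have hKLΩ := union_subset hKΩ hLΩ
  obtain ⟨f, hf, hfK, hfL⟩ := exists_separating φ hΩ hconv (isCompact_holHull φ hΩ hconv hK hKΩ)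
    (isCompact_holHull φ hΩ hconv hL hLΩ) holHull_subset holHull_subset hdisj (fun b hb => by
      obtain ⟨p, hp, h1, h2⟩ := exists_small_large_of_notMem_holHull hKL hKLΩ hb.1
        fun h => hb.2 (hunion h)
      refine ⟨p, hp, ?_, h2⟩
      have h3 : ∀ z ∈ holHull Ω (K ∪ L), ‖p z‖ ≤ 1 / 2 := fun z hz =>
        norm_le_of_mem_holHull hKL hKLΩ hz hp (by norm_num) h1
      rintro z (hz | hz)
      · exact h3 z (holHull_mono hK hKL hKLΩ subset_union_left hz)
      · exact h3 z (holHull_mono hL hKL hKLΩ subset_union_right hz)) hε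
  exact ⟨f, hf, fun z hz => hfK z (subset_holHull hK hKΩ hz),
    fun z hz => hfL z (subset_holHull hL hLΩ hz)⟩

end Hull

section Planar

/-- `z - b` has a continuous logarithm on `S`. -/
def HasLogOn (S : Set ℂ) (b : ℂ) : Prop :=
  ∃ g : ℂ → ℂ, ContinuousOn g S ∧ ∀ z ∈ S, Complex.exp (g z) = z - b

lemma HasLogOn.union {S T : Set ℂ} {b : ℂ} (hS : IsClosed S) (hT : IsClosed T)
    (hST : Disjoint S T) (h₁ : HasLogOn S b) (h₂ : HasLogOn T b) : HasLogOn (S ∪ T) b := by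
  classical
  obtain ⟨g, hg, hgS⟩ := h₁
  obtain ⟨k, hk, hkT⟩ := h₂
  have e₁ : ∀ z ∈ S, (if z ∈ S then g z else k z) = g z := fun z hz => if_pos hz
  have e₂ : ∀ z ∈ T, (if z ∈ S then g z else k z) = k z := fun z hz =>
    if_neg fun h => Set.disjoint_left.1 hST h hz
  refine ⟨fun z => if z ∈ S then g z else k z,
    (hg.congr e₁).union_of_isClosed (hk.congr e₂) hS hT, ?_⟩
  rintro z (hz | hz)
  · simp only [e₁ z hz, hgS z hz]
  · simp only [e₂ z hz, hkT z hz]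

lemma HasLogOn.of_near {S : Set ℂ} {c c' : ℂ} (h : HasLogOn S c)
    (hcc : ∀ z ∈ S, ‖c' - c‖ < ‖z - c‖) : HasLogOn S c' := by
  obtain ⟨g, hg, hgS⟩ := h
  have hne : ∀ z ∈ S, z - c ≠ 0 := fun z hz =>
    norm_pos_iff.1 ((norm_nonneg _).trans_lt (hcc z hz))
  have hslit : ∀ z ∈ S, 1 + -((c' - c) / (z - c)) ∈ Complex.slitPlane := fun z hz => by
    refine Complex.mem_slitPlane_of_norm_lt_one ?_
    rw [norm_neg, norm_div, div_lt_one (norm_pos_iff.2 (hne z hz))]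
    exact hcc z hz
  refine ⟨fun z => g z + Complex.log (1 + -((c' - c) / (z - c))), ?_, fun z hz => ?_⟩
  · refine hg.add (ContinuousOn.clog ?_ hslit)
    refine continuousOn_const.add (ContinuousOn.neg ?_)
    exact continuousOn_const.div (continuousOn_id.sub continuousOn_const) hne
  · rw [Complex.exp_add, hgS z hz, Complex.exp_log (Complex.slitPlane_ne_zero (hslit z hz))]
    field_simp [hne z hz]
    ring

lemma hasLogOn_of_norm_lt {S : Set ℂ} {c : ℂ} (hc : ∀ z ∈ S, ‖z‖ < ‖c‖) : HasLogOn S c := by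
  rcases S.eq_empty_or_nonempty with rfl | ⟨z₀, hz₀⟩
  · exact ⟨0, continuousOn_empty _, by simp⟩
  have hc0 : c ≠ 0 := norm_pos_iff.1 ((norm_nonneg _).trans_lt (hc z₀ hz₀))
  have hslit : ∀ z ∈ S, 1 + -(z / c) ∈ Complex.slitPlane := fun z hz => by
    refine Complex.mem_slitPlane_of_norm_lt_one ?_
    rw [norm_neg, norm_div, div_lt_one (norm_pos_iff.2 hc0)]
    exact hc z hz
  refine ⟨fun z => Complex.log (-c) + Complex.log (1 + -(z / c)), ?_, fun z hz => ?_⟩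
  · refine continuousOn_const.add (ContinuousOn.clog ?_ hslit)
    fun_prop
  · rw [Complex.exp_add, Complex.exp_log (neg_ne_zero.2 hc0),
      Complex.exp_log (Complex.slitPlane_ne_zero (hslit z hz))]
    field_simp
    ring

lemma exists_forall_le_norm_sub {A : Set ℂ} (hA : IsClosed A) {c : ℂ} (hc : c ∉ A) :
    ∃ δ > 0, ∀ z ∈ A, δ ≤ ‖z - c‖ := by
  obtain ⟨δ, hδ, h⟩ := Metric.isOpen_iff.1 hA.isOpen_compl c hc
  refine ⟨δ, hδ, fun z hz => ?_⟩
  by_contra! hlt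
  exact h (mem_ball_iff_norm.2 hlt) hz

lemma hasLogOn_of_notMem {A : Set ℂ} (hA : IsCompact A) (hull : holHull univ A ⊆ A) {b : ℂ}
    (hb : b ∉ A) : HasLogOn A b := by
  by_contra hbT
  set T : Set ℂ := {c | c ∉ A ∧ ¬ HasLogOn A c} with hT
  have hopen : IsOpen T := by
    rw [Metric.isOpen_iff]
    rintro c ⟨hcA, hc⟩
    obtain ⟨δ, hδ, hAδ⟩ := exists_forall_le_norm_sub hA.isClosed hcA
    refine ⟨δ / 2, by positivity, fun c' hc' => ?_⟩
    rw [mem_ball_iff_norm] at hc'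
    have hnear : ∀ z ∈ A, ‖c - c'‖ < ‖z - c'‖ := fun z hz => by
      have h1 := hAδ z hz
      have h2 : ‖z - c‖ ≤ ‖z - c'‖ + ‖c' - c‖ := by
        simpa using norm_add_le (z - c') (c' - c)
      rw [norm_sub_rev]
      linarith
    refine ⟨fun h => ?_, fun h => hc (h.of_near hnear)⟩
    have := hAδ c' h
    linarith
  have hbdd : Bornology.IsBounded T := by
    obtain ⟨C, hC⟩ := hA.isBounded.exists_norm_le
    refine isBounded_closedBall.subset (t := closedBall 0 C) fun c hc => ?_
    rw [mem_closedBall_zero_iff]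
    by_contra! hlt
    exact hc.2 (hasLogOn_of_norm_lt fun z hz => (hC z hz).trans_lt hlt)
  have hfront : frontier T ⊆ A := by
    intro c hc
    by_contra hcA
    have hcT : c ∉ T := by
      rw [hopen.frontier_eq] at hc
      exact hc.2
    have hlog : HasLogOn A c := by
      by_contra h
      exact hcT ⟨hcA, h⟩
    obtain ⟨δ, hδ, hAδ⟩ := exists_forall_le_norm_sub hA.isClosed hcA
    obtain ⟨c', hc', hcc'⟩ := Metric.mem_closure_iff.1 (frontier_subset_closure hc) δ hδ
    rw [dist_comm, dist_eq_norm] at hcc'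
    exact hc'.2 (hlog.of_near fun z hz => hcc'.trans_le (hAδ z hz))
  refine hb (hull ((mem_holHull_iff hA (subset_univ _)).2 ⟨mem_univ _, fun f hf C _ hfC => ?_⟩))
  exact Complex.norm_le_of_forall_mem_frontier_norm_le hbdd
    (differentiableOn_univ.1 hf).diffContOnCl (fun z hz => hfC z (hfront hz))
    (subset_closure ⟨hb, hbT⟩)

lemma not_hasLogOn_of_mem_bounded {B V : Set ℂ} (hB : IsClosed B)
    (hbdd : Bornology.IsBounded V) (hfront : frontier V ⊆ B) {b : ℂ} (hb : b ∈ V) :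
    ¬ HasLogOn B b := by
  classical
  rintro ⟨g, hg, hgB⟩
  obtain ⟨G, hG⟩ := ContinuousMap.exists_restrict_eq hB
    (⟨fun z : B => g z, hg.comp_continuous continuous_subtype_val fun z => z.2⟩ : C(B, ℂ))
  have hGB : ∀ z ∈ B, Complex.exp (G z) = z - b := fun z hz => by
    rw [← hgB z hz]
    congr 1
    exact DFunLike.congr_fun hG ⟨z, hz⟩
  set Θ : ℂ → ℂ := fun z => if z ∈ V then Complex.exp (G z) else z - b with hΘ
  have hΘc : Continuous Θ := Continuous.if (fun z hz => hGB z (hfront hz))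
    (Complex.continuous_exp.comp G.continuous) (by fun_prop)
  have hΘ0 : (0 : ℂ) ∉ Θ '' univ := by
    rintro ⟨z, -, hz⟩
    by_cases hzV : z ∈ V
    · simp [hΘ, hzV] at hz
    · simp only [hΘ, hzV, if_false, sub_eq_zero] at hz
      exact hzV (hz ▸ hb)
  have hsimp : IsSimplyConnected (univ : Set ℂ) := by
    have := (convex_univ (𝕜 := ℝ) (E := ℂ)).contractibleSpace univ_nonempty
    exact (inferInstance : SimplyConnectedSpace (univ : Set ℂ))
  obtain ⟨Λ, hΛ, hΛΘ⟩ := Complex.exists_continuousOn_eqOn_exp_comp hsimp isOpen_univ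
    hΘc.continuousOn hΘ0
  rw [continuousOn_univ] at hΛ
  obtain ⟨R, hR0, hR⟩ := hbdd.subset_ball_lt 0 b
  have hcirc : ∀ θ : ℝ, Complex.exp (Λ (b + R * Complex.exp (θ * Complex.I))) =
      R * Complex.exp (θ * Complex.I) := fun θ => by
    have hV : b + R * Complex.exp (θ * Complex.I) ∉ V := fun h => by
      have := hR h
      simp [Complex.norm_exp_ofReal_mul_I, abs_of_pos hR0] at this
    have := hΛΘ (mem_univ (b + R * Complex.exp (θ * Complex.I)))
    simpa [hΘ, hV] using this
  set k : ℝ → ℂ := fun θ => Λ (b + R * Complex.exp (θ * Complex.I)) - θ * Complex.I - Real.log R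
    with hk
  have hkc : Continuous k := by fun_prop
  have hk1 : ∀ θ, Complex.exp (k θ) = 1 := fun θ => by
    have hR' : (R : ℂ) ≠ 0 := by exact_mod_cast hR0.ne'
    simp only [hk]
    rw [Complex.exp_sub, Complex.exp_sub, hcirc, ← Complex.ofReal_exp, Real.exp_log hR0]
    field_simp
  have hkint : ∀ θ, ∃ n : ℤ, (k θ).im / (2 * Real.pi) = n := fun θ => by
    obtain ⟨n, hn⟩ := Complex.exp_eq_one_iff.1 (hk1 θ)
    refine ⟨n, ?_⟩
    rw [hn]
    have := Real.pi_ne_zero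
    simp
  set μ : ℝ → ℝ := fun θ => (k θ).im / (2 * Real.pi) with hμ
  have hμc : Continuous μ := (Complex.continuous_im.comp hkc).div_const _
  have hperiod : μ (2 * Real.pi) = μ 0 - 1 := by
    have hpi := Real.pi_ne_zero
    have h1 : k (2 * Real.pi) = k 0 - (2 * Real.pi : ℝ) * Complex.I := by
      simp only [hk]
      push_cast
      rw [Complex.exp_two_pi_mul_I, zero_mul, Complex.exp_zero]
      ring
    simp only [hμ, h1]
    simp
    field_simp
  obtain ⟨θ, hθ⟩ := mem_range_of_exists_le_of_exists_ge (c := μ 0 - 1 / 2) hμc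
    ⟨2 * Real.pi, by rw [hperiod]; linarith⟩ ⟨0, by linarith⟩
  obtain ⟨n₀, hn₀⟩ := hkint 0
  obtain ⟨n, hn⟩ := hkint θ
  have h2 : (n : ℝ) = n₀ - 1 / 2 := by rw [← hn, ← hn₀]; exact hθ
  have h3 : 2 * n = 2 * n₀ - 1 := by
    have : (2 * n : ℝ) = 2 * n₀ - 1 := by linarith
    exact_mod_cast this
  omega

/-- The local maximum property of hulls in the plane. -/
lemma isOpen_holHull_diff {B : Set ℂ} (hB : IsCompact B) : IsOpen (holHull univ B \ B) := by
  set φ : ℂ ≃L[ℂ] (Unit → ℂ) := (ContinuousLinearEquiv.funUnique Unit ℂ ℂ).symm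
  have hH : IsCompact (holHull univ B) :=
    isCompact_holHull φ isOpen_univ convex_univ hB (subset_univ _)
  rw [Metric.isOpen_iff]
  rintro b ⟨hbH, hbB⟩
  obtain ⟨δ, hδ, hBδ⟩ := exists_forall_le_norm_sub hB.isClosed hbB
  refine ⟨δ / 3, by positivity, fun c hc => ?_⟩
  rw [mem_ball_iff_norm] at hc
  have hcB : ∀ z ∈ B, 2 * (δ / 3) ≤ ‖z - c‖ := fun z hz => by
    have h1 := hBδ z hz
    have h2 : ‖z - b‖ ≤ ‖z - c‖ + ‖c - b‖ := by simpa using norm_add_le (z - c) (c - b)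
    linarith
  refine ⟨?_, fun h => by have := hcB c h; rw [sub_self, norm_zero] at this; linarith⟩
  by_contra hcH
  have hol : HolNear (fun z => (z - c)⁻¹) (holHull univ B) := .of_forall fun x hx => by
    have hxc : x ≠ c := fun h => hcH (h ▸ hx)
    filter_upwards [isOpen_ne.eventually_mem hxc] with y hy
    exact (differentiableAt_id.sub_const c).inv (sub_ne_zero.2 hy)
  have happ := oka_weil φ isOpen_univ convex_univ hH (subset_univ _) (fun x hx => by
    obtain ⟨p, hp, h1, h2⟩ := exists_small_large_of_notMem_holHull hB (subset_univ _) hx.1 hx.2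
    exact ⟨p, hp, fun z hz => norm_le_of_mem_holHull hB (subset_univ _) hz hp (by norm_num) h1,
      h2⟩) hol
  obtain ⟨F, hF, hFf⟩ := happ (1 / (2 * δ)) (by positivity)
  have h1 : ‖F b‖ ≤ 2 / δ := norm_le_of_mem_holHull hB (subset_univ _) hbH hF (by positivity)
    fun z hz => by
      have h2 := hFf z (subset_holHull hB (subset_univ _) hz)
      have h3 : ‖(z - c)⁻¹‖ ≤ (2 * (δ / 3))⁻¹ := by
        rw [norm_inv]
        exact inv_anti₀ (by positivity) (hcB z hz)
      have h4 : ‖F z‖ ≤ ‖(z - c)⁻¹‖ + ‖(z - c)⁻¹ - F z‖ := by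
        simpa using norm_sub_le (z - c)⁻¹ ((z - c)⁻¹ - F z)
      have h5 : (2 * (δ / 3))⁻¹ + 1 / (2 * δ) = 2 / δ := by field_simp; norm_num
      linarith
  have h2 := hFf b hbH
  have hbc : b ≠ c := fun h => hcH (h ▸ hbH)
  have h3 : 3 / δ ≤ ‖(b - c)⁻¹‖ := by
    rw [norm_inv, norm_sub_rev, show 3 / δ = (δ / 3)⁻¹ by field_simp]
    exact inv_anti₀ (norm_pos_iff.2 (sub_ne_zero.2 hbc.symm)) hc.le
  have h4 : ‖(b - c)⁻¹‖ ≤ ‖F b‖ + ‖(b - c)⁻¹ - F b‖ := by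
    simpa using norm_add_le (F b) ((b - c)⁻¹ - F b)
  have h5 : 3 / δ = 2 / δ + 2 * (1 / (2 * δ)) := by field_simp; norm_num
  have h6 : 0 < 1 / (2 * δ) := by positivity
  linarith

/-- The union of two disjoint polynomially convex compact sets in the plane is polynomially
convex. -/
theorem holHull_union_subset {A B : Set ℂ} (hA : IsCompact A) (hB : IsCompact B)
    (hAB : Disjoint A B) (hullA : holHull univ A ⊆ A) (hullB : holHull univ B ⊆ B) :
    holHull univ (A ∪ B) ⊆ A ∪ B := by
  have hU := hA.union hB
  have hH : IsCompact (holHull univ (A ∪ B)) :=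
    isCompact_holHull (ContinuousLinearEquiv.funUnique Unit ℂ ℂ).symm isOpen_univ convex_univ hU
      (subset_univ _)
  intro b hb
  by_contra hbU
  have hopen := isOpen_holHull_diff hU
  refine not_hasLogOn_of_mem_bounded hU.isClosed (hH.isBounded.subset sdiff_subset) ?_ ⟨hb, hbU⟩
    (.union hA.isClosed hB.isClosed hAB (hasLogOn_of_notMem hA hullA fun h => hbU (Or.inl h))
      (hasLogOn_of_notMem hB hullB fun h => hbU (Or.inr h)))
  intro z hz
  rw [hopen.frontier_eq] at hz
  by_contra hzU
  exact hz.2 ⟨closure_minimal sdiff_subset hH.isClosed hz.1, hzU⟩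

end Planar

section Kallin

variable {E : Type*} [NormedAddCommGroup E] [NormedSpace ℂ E] {Ω K L : Set E}

/-- A function small on `L` and close to `1` on `K` separates the hull of `K` from that of
`K ∪ L`. -/
lemma mem_holHull_left_of_peak (hK : IsCompact K) (hKΩ : K ⊆ Ω) (hL : IsCompact L) (hLΩ : L ⊆ Ω)
    {x : E} (hx : x ∈ holHull Ω (K ∪ L))
    (hpeak : ∀ ε > 0, ∃ G : E → ℂ, DifferentiableOn ℂ G Ω ∧ (∀ z ∈ K, ‖G z - 1‖ ≤ ε) ∧
      (∀ z ∈ L, ‖G z‖ ≤ ε) ∧ ‖G x - 1‖ ≤ ε) : x ∈ holHull Ω K := by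
  by_contra hxK
  obtain ⟨h, hh, hhK, hhx⟩ := exists_small_large_of_notMem_holHull hK hKΩ hx.1 hxK
  obtain ⟨C, hC⟩ := (hL.image_of_continuousOn (hh.continuousOn.mono hLΩ)).isBounded.exists_norm_le
  obtain ⟨G, hG, hGK, hGL, hGx⟩ := hpeak (1 / (4 * (|C| + 1))) (by positivity)
  have hε : 1 / (4 * (|C| + 1)) ≤ 1 / 4 := by
    rw [div_le_div_iff₀ (by positivity) (by norm_num)]
    linarith [abs_nonneg C]
  have hle : ‖h x * G x‖ ≤ 1 := by
    refine norm_le_of_mem_holHull (hK.union hL) (union_subset hKΩ hLΩ) hx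
      (f := fun z => h z * G z) (hh.mul hG) zero_le_one fun z hz => ?_
    rw [norm_mul]
    rcases hz with hz | hz
    · have h1 : ‖G z‖ ≤ 5 / 4 := by
        have h2 : ‖G z‖ ≤ ‖G z - 1‖ + 1 := by simpa using norm_add_le (G z - 1) 1
        linarith [hGK z hz]
      nlinarith [hhK z hz, norm_nonneg (h z), norm_nonneg (G z)]
    · have h1 : ‖h z‖ ≤ |C| + 1 := by
        linarith [hC _ (mem_image_of_mem h hz), le_abs_self C]
      calc ‖h z‖ * ‖G z‖ ≤ (|C| + 1) * (1 / (4 * (|C| + 1))) :=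
            mul_le_mul h1 (hGL z hz) (norm_nonneg _) (by positivity)
        _ = 1 / 4 := by field_simp
        _ ≤ 1 := by norm_num
  rw [norm_mul] at hle
  have h1 : 3 / 4 ≤ ‖G x‖ := by
    have h2 : 1 ≤ ‖G x‖ + ‖G x - 1‖ := by simpa using norm_sub_le (G x) (G x - 1)
    linarith
  nlinarith

/-- Kallin's lemma for two compact sets with separated images in the plane. -/
theorem holHull_union_of_disjoint_image (hK : IsCompact K) (hKΩ : K ⊆ Ω) (hL : IsCompact L)
    (hLΩ : L ⊆ Ω) {f : E → ℂ} (hf : DifferentiableOn ℂ f Ω)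
    (hdisj : Disjoint (holHull univ (f '' K)) (holHull univ (f '' L))) :
    holHull Ω (K ∪ L) ⊆ holHull Ω K ∪ holHull Ω L := by
  set φ : ℂ ≃L[ℂ] (Unit → ℂ) := (ContinuousLinearEquiv.funUnique Unit ℂ ℂ).symm
  have hfK := hK.image_of_continuousOn (hf.continuousOn.mono hKΩ)
  have hfL := hL.image_of_continuousOn (hf.continuousOn.mono hLΩ)
  set A := holHull univ (f '' K) with hA
  set B := holHull univ (f '' L) with hB
  have hAc : IsCompact A := isCompact_holHull φ isOpen_univ convex_univ hfK (subset_univ _)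
  have hBc : IsCompact B := isCompact_holHull φ isOpen_univ convex_univ hfL (subset_univ _)
  have hAh : holHull univ A = A := holHull_idem φ isOpen_univ convex_univ hfK (subset_univ _)
  have hBh : holHull univ B = B := holHull_idem φ isOpen_univ convex_univ hfL (subset_univ _)
  have hAB : holHull univ (A ∪ B) ⊆ A ∪ B := holHull_union_subset hAc hBc hdisj hAh.le hBh.le
  have hKA : ∀ z ∈ K, f z ∈ A := fun z hz =>
    subset_holHull hfK (subset_univ _) (mem_image_of_mem f hz)
  have hLB : ∀ z ∈ L, f z ∈ B := fun z hz =>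
    subset_holHull hfL (subset_univ _) (mem_image_of_mem f hz)
  have hsep : ∀ ε > 0, ∃ g : ℂ → ℂ, DifferentiableOn ℂ g univ ∧ (∀ z ∈ A, ‖g z‖ ≤ ε) ∧
      ∀ z ∈ B, ‖g z - 1‖ ≤ ε := fun ε hε =>
    exists_separating_of_holHull φ isOpen_univ convex_univ hAc (subset_univ _) hBc (subset_univ _)
      (by rwa [hAh, hBh]) (by rwa [hAh, hBh]) hε
  intro x hx
  have hfx : f x ∈ A ∪ B := by
    refine hAB (holHull_mono (hfK.union hfL) (hAc.union hBc) (subset_univ _) ?_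
      (image_union f K L ▸ image_mem_holHull (hK.union hL) (union_subset hKΩ hLΩ) hf hx))
    exact union_subset_union (subset_holHull hfK (subset_univ _))
      (subset_holHull hfL (subset_univ _))
  rcases hfx with hfx | hfx
  · refine Or.inl (mem_holHull_left_of_peak hK hKΩ hL hLΩ hx fun ε hε => ?_)
    obtain ⟨g, hg, hgA, hgB⟩ := hsep ε hε
    refine ⟨fun z => 1 - g (f z), (hg.comp hf (mapsTo_univ _ _)).const_sub 1, fun z hz => ?_,
      fun z hz => ?_, ?_⟩
    · simpa using hgA _ (hKA z hz)
    · rw [norm_sub_rev]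
      exact hgB _ (hLB z hz)
    · simpa using hgA _ hfx
  · rw [union_comm] at hx
    refine Or.inr (mem_holHull_left_of_peak hL hLΩ hK hKΩ hx fun ε hε => ?_)
    obtain ⟨g, hg, hgA, hgB⟩ := hsep ε hε
    exact ⟨fun z => g (f z), hg.comp hf (mapsTo_univ _ _), fun z hz => hgB _ (hLB z hz),
      fun z hz => hgA _ (hKA z hz), hgB _ hfx⟩

theorem exists_disjoint_holHull_image_iff [NormedSpace ℝ E] [IsScalarTower ℝ ℂ E] {ι : Type}
    [Fintype ι] (φ : E ≃L[ℂ] (ι → ℂ)) (hΩ : IsOpen Ω) (hconv : Convex ℝ Ω)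
    (hK : IsCompact K) (hKΩ : K ⊆ Ω) (hL : IsCompact L) (hLΩ : L ⊆ Ω) :
    (∃ f : E → ℂ, DifferentiableOn ℂ f Ω ∧
        holHull univ (f '' K) ∩ holHull univ (f '' L) = ∅) ↔
      holHull Ω K ∩ holHull Ω L = ∅ ∧ holHull Ω (K ∪ L) = holHull Ω K ∪ holHull Ω L := by
  have hsub : holHull Ω K ∪ holHull Ω L ⊆ holHull Ω (K ∪ L) :=
    union_subset (holHull_mono hK (hK.union hL) (union_subset hKΩ hLΩ) subset_union_left)
      (holHull_mono hL (hK.union hL) (union_subset hKΩ hLΩ) subset_union_right)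
  simp only [← Set.disjoint_iff_inter_eq_empty]
  constructor
  · rintro ⟨f, hf, hdisj⟩
    refine ⟨Set.disjoint_left.2 fun x hxK hxL => ?_,
      (holHull_union_of_disjoint_image hK hKΩ hL hLΩ hf hdisj).antisymm hsub⟩
    exact Set.disjoint_left.1 hdisj (image_mem_holHull hK hKΩ hf hxK)
      (image_mem_holHull hL hLΩ hf hxL)
  · rintro ⟨hdisj, hunion⟩
    obtain ⟨f, hf, hfK, hfL⟩ := exists_separating_of_holHull φ hΩ hconv hK hKΩ hL hLΩ hdisj
      hunion.le (show (0 : ℝ) < 1 / 4 by norm_num)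
    refine ⟨f, hf, Set.disjoint_left.2 fun w hwK hwL => ?_⟩
    have h1 : ‖w‖ ≤ 1 / 4 := norm_le_of_mem_holHull
      (hK.image_of_continuousOn (hf.continuousOn.mono hKΩ)) (subset_univ _) hwK
      (f := fun z => z) differentiableOn_id (by norm_num) (forall_mem_image.2 hfK)
    have h2 : ‖w - 1‖ ≤ 1 / 4 := norm_le_of_mem_holHull
      (hL.image_of_continuousOn (hf.continuousOn.mono hLΩ)) (subset_univ _) hwL
      (f := fun z => z - 1) (differentiableOn_id.sub_const 1) (by norm_num)
      (forall_mem_image.2 hfL)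
    have h3 : 1 ≤ ‖w‖ + ‖w - 1‖ := by simpa using norm_sub_le w (w - 1)
    linarith

end Kallin

/-- For compact subsets `K, L` of a convex domain `Ω ⊆ ℂⁿ`: there is
`f ∈ 𝒪(Ω)` with disjoint polynomially convex hulls of `f(K)` and `f(L)` iff the `𝒪(Ω)`-hulls of
`K` and `L` are disjoint and the hull of `K ∪ L` is the union of the hulls. In particular, for
disjoint compact `𝒪(Ω)`-convex `K, L`, `K ∪ L` is `𝒪(Ω)`-convex iff such `f` exists. -/
theorem stmt_14 {n : ℕ} (Ω : Set (CSpace n)) (hΩopen : IsOpen Ω) (hΩconv : Convex ℝ Ω)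
    (hΩne : Ω.Nonempty)
    (K L : Set (CSpace n)) (hK : IsCompact K) (hKΩ : K ⊆ Ω) (hL : IsCompact L) (hLΩ : L ⊆ Ω) :
    ((∃ f : CSpace n → ℂ, DifferentiableOn ℂ f Ω ∧ PHull (f '' K) ∩ PHull (f '' L) = ∅) ↔
      (OHull Ω K ∩ OHull Ω L = ∅ ∧ OHull Ω (K ∪ L) = OHull Ω K ∪ OHull Ω L)) ∧
    (K ∩ L = ∅ → OHull Ω K = K → OHull Ω L = L →
      (OHull Ω (K ∪ L) = K ∪ L ↔
        ∃ f : CSpace n → ℂ, DifferentiableOn ℂ f Ω ∧ PHull (f '' K) ∩ PHull (f '' L) = ∅)) := by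
  have hP : ∀ A : Set ℂ, PHull A = holHull univ A := fun A => by
    ext z
    simp [PHull, holHull, differentiableOn_univ]
  have hO : ∀ S : Set (CSpace n), OHull Ω S = holHull Ω S := fun S => rfl
  have key := exists_disjoint_holHull_image_iff (EuclideanSpace.equiv (Fin n) ℂ) hΩopen hΩconv
    hK hKΩ hL hLΩ
  simp only [hP, hO]
  refine ⟨key, fun hKL hKh hLh => ?_⟩
  rw [key, hKh, hLh]
  exact (and_iff_right hKL).symm
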